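/- Let n ≥ 2 be an integer, α ∈ (0,n), β > 0 and A > 0, and assume α < β and β < 1. Then there exists a mass m_* = m_*(n,α,β,A) > 0 such that for every m > m_*, the ball B[m] is not an L¹-local minimizer at mass m of E_{α,β,A}. -/

import Mathlib

open MeasureTheory Metric Filter ENNReal

noncomputable section

/-- The Lebesgue density of `E` at `x` equals `d`. -/
def HasDensity {n : ℕ} (E : Set (EuclideanSpace ℝ (Fin n)))
    (x : EuclideanSpace ℝ (Fin n)) (d : ℝ) : Prop :=
  Filter.Tendsto
    (fun r : ℝ => (volume (E ∩ Metric.ball x r)).toReal / (volume (Metric.ball x r)).toReal)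
    (nhdsWithin 0 (Set.Ioi 0)) (nhds d)

/-- The essential boundary of `E`: points where `E` has neither density 0 nor density 1. -/
def essBoundary {n : ℕ} (E : Set (EuclideanSpace ℝ (Fin n))) :
    Set (EuclideanSpace ℝ (Fin n)) :=
  {x | ¬ HasDensity E x 0 ∧ ¬ HasDensity E x 1}

/-- The perimeter of `E`: the `(n-1)`-dimensional Hausdorff measure of the essential
boundary of `E`. -/
def perimeter {n : ℕ} (E : Set (EuclideanSpace ℝ (Fin n))) : ℝ≥0∞ :=
  μH[(n : ℝ) - 1] (essBoundary E)

/-- The Riesz energy `V_α(E) = ∫_{E×E} |x-y|^(α-n) dx dy`. -/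
def rieszEnergy {n : ℕ} (α : ℝ) (E : Set (EuclideanSpace ℝ (Fin n))) : ℝ≥0∞ :=
  ∫⁻ x in E, ∫⁻ y in E, ENNReal.ofReal (‖x - y‖ ^ (α - (n : ℝ)))

/-- The potential energy `U_{β,A}(E) = A ∫_E |x|^β dx`. -/
def potEnergy {n : ℕ} (β A : ℝ) (E : Set (EuclideanSpace ℝ (Fin n))) : ℝ≥0∞ :=
  ∫⁻ x in E, ENNReal.ofReal (A * ‖x‖ ^ β)

/-- The total energy `E_{α,β,A} = P + V_α + U_{β,A}`. -/
def totalEnergy {n : ℕ} (α β A : ℝ) (E : Set (EuclideanSpace ℝ (Fin n))) : ℝ≥0∞ :=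
  perimeter E + rieszEnergy α E + potEnergy β A E

/-- `E` is a minimizer of `E_{α,β,A}` at mass `m`. -/
def IsMinimizer {n : ℕ} (α β A m : ℝ) (E : Set (EuclideanSpace ℝ (Fin n))) : Prop :=
  MeasurableSet E ∧ volume E = ENNReal.ofReal m ∧
    ∀ F : Set (EuclideanSpace ℝ (Fin n)), MeasurableSet F → volume F = ENNReal.ofReal m →
      totalEnergy α β A E ≤ totalEnergy α β A F

/-- The unit ball of `ℝⁿ` centered at the origin. -/
def unitBall (n : ℕ) : Set (EuclideanSpace ℝ (Fin n)) := Metric.ball 0 1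

/-- `B[m]`: the open ball centered at `0` with volume `m`. -/
def ballOfVolume (n : ℕ) (m : ℝ) : Set (EuclideanSpace ℝ (Fin n)) :=
  Metric.ball 0 ((m / (volume (unitBall n)).toReal) ^ (1 / (n : ℝ)))

/-- `E` is an `L¹`-local minimizer of `E_{α,β,A}` at mass `m`: there is `ε > 0` such that
`E` minimizes the energy among sets of the same mass within symmetric difference `< ε`. -/
def IsL1LocalMin {n : ℕ} (α β A m : ℝ) (E : Set (EuclideanSpace ℝ (Fin n))) : Prop :=
  MeasurableSet E ∧ volume E = ENNReal.ofReal m ∧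
    ∃ ε : ℝ, 0 < ε ∧ ∀ F : Set (EuclideanSpace ℝ (Fin n)), MeasurableSet F →
      volume F = ENNReal.ofReal m → volume (symmDiff E F) < ENNReal.ofReal ε →
        totalEnergy α β A E ≤ totalEnergy α β A F

section Helpers
open scoped Pointwise Topology


abbrev EE (n : ℕ) := EuclideanSpace ℝ (Fin n)

abbrev SS (n : ℕ) := sphere (0 : EE n) 1

noncomputable abbrev sig (n : ℕ) : Measure (SS n) := (volume : Measure (EE n)).toSphere

lemma polar_lintegral {n : ℕ} (hn : 2 ≤ n) (h : EE n → ℝ≥0∞) (hm : Measurable h) :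
    ∫⁻ x, h x = ∫⁻ θ : SS n, (∫⁻ r in Set.Ioi (0 : ℝ),
      ENNReal.ofReal (r ^ (n - 1)) * h (r • (θ : EE n))) ∂(sig n) := by
  have : Nonempty (Fin n) := ⟨⟨0, by omega⟩⟩
  have : Nontrivial (EE n) := inferInstance
  have hmp := (volume : Measure (EE n)).measurePreserving_homeomorphUnitSphereProd
  have hdim : Module.finrank ℝ (EE n) = n := by simp
  rw [hdim] at hmp
  have e1 : ∫⁻ x, h x = ∫⁻ x : ({(0 : EE n)}ᶜ : Set (EE n)), h x ∂(volume.comap Subtype.val) := by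
    rw [lintegral_subtype_comap (measurableSet_singleton _).compl, restrict_compl_singleton]
  have e2 : ∫⁻ x : ({(0 : EE n)}ᶜ : Set (EE n)), h x ∂(volume.comap Subtype.val) =
      ∫⁻ p : SS n × Set.Ioi (0 : ℝ), h ((p.2 : ℝ) • (p.1 : EE n))
        ∂((sig n).prod (Measure.volumeIoiPow (n - 1))) := by
    rw [← hmp.lintegral_comp]
    · apply lintegral_congr
      intro x
      congr 1
      have hx : ‖(x : EE n)‖ ≠ 0 := norm_ne_zero_iff.2 x.2
      simp [smul_smul, hx]
    · fun_prop
  rw [e1, e2, lintegral_prod _ (by fun_prop)]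
  apply lintegral_congr
  intro θ
  simp only [Measure.volumeIoiPow]
  rw [lintegral_withDensity_eq_lintegral_mul _ (by fun_prop) (by fun_prop)]
  exact lintegral_subtype_comap measurableSet_Ioi
    (fun r : ℝ => ENNReal.ofReal (r ^ (n - 1)) * h (r • (θ : EE n)))

lemma polar_set {n : ℕ} (hn : 2 ≤ n) (h : EE n → ℝ≥0∞) (hm : Measurable h)
    (ρ : EE n → ℝ) (hρ : Measurable ρ) (hh : ∀ r : ℝ, 0 < r → ∀ x, ρ (r • x) = ρ x) :
    ∫⁻ x in {x | ‖x‖ < ρ x}, h x = ∫⁻ θ : SS n, (∫⁻ r in Set.Ioo (0 : ℝ) (ρ θ),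
      ENNReal.ofReal (r ^ (n - 1)) * h (r • (θ : EE n))) ∂(sig n) := by
  have hF : MeasurableSet {x : EE n | ‖x‖ < ρ x} := measurableSet_lt measurable_norm hρ
  rw [← lintegral_indicator hF, polar_lintegral hn _ (hm.indicator hF)]
  apply lintegral_congr
  intro θ
  rw [← lintegral_indicator measurableSet_Ioi, ← lintegral_indicator measurableSet_Ioo]
  apply lintegral_congr
  intro r
  by_cases hr : 0 < r
  · have : ‖r • (θ : EE n)‖ = r := by
      rw [norm_smul, norm_eq_of_mem_sphere, Real.norm_of_nonneg hr.le, mul_one]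
    by_cases h2 : r < ρ θ
    · simp [Set.indicator, hr, h2, this, hh r hr]
    · simp [Set.indicator, hr, h2, this, hh r hr]
  · simp [Set.indicator, hr]

lemma scale_lintegral {E : Type*} [NormedAddCommGroup E] [NormedSpace ℝ E] [MeasurableSpace E]
    [BorelSpace E] [FiniteDimensional ℝ E] (μ : Measure E) [μ.IsAddHaarMeasure]
    {c : ℝ} (hc : 0 < c) (F : Set E) (h : E → ℝ≥0∞) :
    ∫⁻ x in c • F, h x ∂μ = ENNReal.ofReal (c ^ Module.finrank ℝ E) * ∫⁻ x in F, h (c • x) ∂μ := by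
  have e := (MeasurableEquiv.smul₀ c hc.ne' : E ≃ᵐ E)
  have h1 : Measure.map (fun x : E => c • x) μ =
      ENNReal.ofReal (c ^ Module.finrank ℝ E)⁻¹ • μ := by
    have := Measure.map_addHaar_smul μ hc.ne'
    rwa [abs_of_pos (by positivity)] at this
  have h2 : ∫⁻ x in F, h (c • x) ∂μ
      = ∫⁻ x in c • F, h x ∂(Measure.map (fun x : E => c • x) μ) := by
    have hme : MeasurableEmbedding (fun x : E => c • x) :=
      (MeasurableEquiv.smul₀ c hc.ne' : E ≃ᵐ E).measurableEmbedding
    rw [hme.restrict_map, hme.lintegral_map, Set.preimage_smul₀ hc.ne', smul_smul,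
      inv_mul_cancel₀ hc.ne', one_smul]
  rw [h2, h1, Measure.restrict_smul, lintegral_smul_measure, smul_eq_mul, ← mul_assoc,
    ← ENNReal.ofReal_mul (by positivity), mul_inv_cancel₀ (by positivity), ENNReal.ofReal_one,
    one_mul]

lemma neg_toSphere {n : ℕ} :
    MeasurePreserving (fun θ : SS n => -θ) (sig n) (sig n) := by
  refine ⟨by fun_prop, ?_⟩
  ext s hs
  rw [Measure.map_apply (by fun_prop) hs, Measure.toSphere_apply' _ hs,
    Measure.toSphere_apply' _ (by exact (measurable_neg : Measurable fun θ : SS n => -θ) hs)]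
  congr 1
  have : Set.Ioo (0 : ℝ) 1 • ((↑) '' ((fun θ : SS n => -θ) ⁻¹' s) : Set (EE n)) =
      (fun x : EE n => -x) ⁻¹' (Set.Ioo (0 : ℝ) 1 • ((↑) '' s : Set (EE n))) := by
    ext x
    simp only [Set.mem_smul, Set.mem_preimage, Set.mem_image]
    constructor
    · rintro ⟨a, ha, _, ⟨y, hy, rfl⟩, rfl⟩
      exact ⟨a, ha, _, ⟨-y, hy, rfl⟩, by simp⟩
    · rintro ⟨a, ha, _, ⟨y, hy, rfl⟩, h⟩
      refine ⟨a, ha, _, ⟨-y, by simpa using hy, rfl⟩, ?_⟩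
      simp [h]
  rw [this]
  exact Measure.measure_preimage_neg volume _


lemma symm_le {X : Type*} [MeasurableSpace X] {μ : Measure X} {ν : X → X}
    (hν : MeasurePreserving ν μ μ) {f w : X → ℝ≥0∞} (hf : Measurable f) (hw : Measurable w)
    (hwν : ∀ x, w (ν x) = w x) {K : ℝ≥0∞} (hK : ∀ x, f x + f (ν x) ≤ 2 * K) :
    ∫⁻ x, f x * w x ∂μ ≤ K * ∫⁻ x, w x ∂μ := by
  have hfw : Measurable (fun x => f x * w x) := hf.mul hw
  have h1 : ∫⁻ x, f x * w x ∂μ = ∫⁻ x, f (ν x) * w x ∂μ := by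
    rw [← hν.lintegral_comp hfw]
    simp [hwν]
  have h2 : 2 * ∫⁻ x, f x * w x ∂μ ≤ 2 * (K * ∫⁻ x, w x ∂μ) := by
    calc 2 * ∫⁻ x, f x * w x ∂μ = ∫⁻ x, f x * w x ∂μ + ∫⁻ x, f (ν x) * w x ∂μ := by
          rw [← h1, two_mul]
      _ = ∫⁻ x, (f x + f (ν x)) * w x ∂μ := by
          rw [← lintegral_add_left hfw]
          simp only [add_mul]
      _ ≤ ∫⁻ x, (2 * K) * w x ∂μ := by
          apply lintegral_mono; intro x; dsimp only; gcongr; exact hK x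
      _ = 2 * (K * ∫⁻ x, w x ∂μ) := by
          rw [lintegral_const_mul _ hw, mul_assoc]
  exact (ENNReal.mul_le_mul_iff_right (by simp) (by simp)).1 h2

lemma symm_eq {X : Type*} [MeasurableSpace X] {μ : Measure X} {ν : X → X}
    (hν : MeasurePreserving ν μ μ) {f w : X → ℝ≥0∞} (hf : Measurable f) (hw : Measurable w)
    (hwν : ∀ x, w (ν x) = w x) (hK : ∀ x, f x + f (ν x) = 2) :
    ∫⁻ x, f x * w x ∂μ = ∫⁻ x, w x ∂μ := by
  have hfw : Measurable (fun x => f x * w x) := hf.mul hw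
  have h1 : ∫⁻ x, f x * w x ∂μ = ∫⁻ x, f (ν x) * w x ∂μ := by
    rw [← hν.lintegral_comp hfw]
    simp [hwν]
  have h2 : 2 * ∫⁻ x, f x * w x ∂μ = 2 * (∫⁻ x, w x ∂μ) := by
    calc 2 * ∫⁻ x, f x * w x ∂μ = ∫⁻ x, f x * w x ∂μ + ∫⁻ x, f (ν x) * w x ∂μ := by
          rw [← h1, two_mul]
      _ = ∫⁻ x, (f x + f (ν x)) * w x ∂μ := by
          rw [← lintegral_add_left hfw]
          simp only [add_mul]
      _ = 2 * (∫⁻ x, w x ∂μ) := by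
          simp only [hK]
          rw [lintegral_const_mul _ hw]
  exact (ENNReal.mul_right_inj (by simp) (by simp)).1 h2

lemma bern {q t : ℝ} (hq : 0 ≤ q) (hq1 : q ≤ 1) (ht : |t| ≤ 1 / 2) :
    (1 + t) ^ (1 + q) + (1 - t) ^ (1 + q) ≤ 2 * (1 + t ^ 2) := by
  obtain ⟨h1, h2⟩ := abs_le.1 ht
  have a1 := rpow_one_add_le_one_add_mul_self (s := t) (by linarith) hq hq1
  have a2 := rpow_one_add_le_one_add_mul_self (s := -t) (by linarith) hq hq1
  rw [← sub_eq_add_neg] at a2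
  rw [Real.rpow_add (by linarith), Real.rpow_add (by linarith), Real.rpow_one, Real.rpow_one]
  nlinarith [sq_nonneg t, mul_le_mul_of_nonneg_left a1 (by linarith : 0 ≤ 1 + t),
    mul_le_mul_of_nonneg_left a2 (by linarith : 0 ≤ 1 - t), mul_nonneg (sub_nonneg.2 hq1) (sq_nonneg t)]

lemma bern0 {q t : ℝ} (hq : 0 ≤ q) (hq1 : q ≤ 1) (ht : |t| ≤ 1 / 2) :
    (1 + t) ^ q + (1 - t) ^ q ≤ 2 := by
  obtain ⟨h1, h2⟩ := abs_le.1 ht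
  have a1 := rpow_one_add_le_one_add_mul_self (s := t) (by linarith) hq hq1
  have a2 := rpow_one_add_le_one_add_mul_self (s := -t) (by linarith) hq hq1
  rw [← sub_eq_add_neg] at a2
  linarith

/-- lower bound for the measure of spherical caps -/
lemma cap_lower {n : ℕ} (hn : 2 ≤ n) (θ₀ : SS n) {ε : ℝ} (h0 : 0 < ε) (h1 : ε ≤ 1) :
    volume (ball (0 : EE n) 1) * ENNReal.ofReal (ε ^ (n - 1)) ≤
      ENNReal.ofReal (2 ^ n) * sig n (ball θ₀ (2 * ε)) := by
  have hdim : Module.finrank ℝ (EE n) = n := by simp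
  have : Nonempty (Fin n) := ⟨⟨0, by omega⟩⟩
  have e0 : volume (ball (θ₀ : EE n) ε) = ENNReal.ofReal (ε ^ n) * volume (ball (0 : EE n) 1) := by
    rw [Measure.addHaar_ball_of_pos _ _ h0, hdim]
  have key : volume (ball (θ₀ : EE n) ε) ≤
      ENNReal.ofReal (2 ^ n * ε) * sig n (ball θ₀ (2 * ε)) := by
    calc volume (ball (θ₀ : EE n) ε)
        = ∫⁻ x, (ball (θ₀ : EE n) ε).indicator (fun _ => 1) x := by
          rw [lintegral_indicator measurableSet_ball]; simp
      _ = ∫⁻ θ : SS n, (∫⁻ r in Set.Ioi (0 : ℝ), ENNReal.ofReal (r ^ (n - 1)) *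
            (ball (θ₀ : EE n) ε).indicator (fun _ => 1) (r • (θ : EE n))) ∂(sig n) :=
          polar_lintegral hn _ (measurable_const.indicator measurableSet_ball)
      _ ≤ ∫⁻ θ : SS n, (ball θ₀ (2 * ε)).indicator
            (fun _ => ENNReal.ofReal (2 ^ n * ε)) θ ∂(sig n) := by
          apply lintegral_mono
          intro θ
          have hθ : ‖(θ : EE n)‖ = 1 := norm_eq_of_mem_sphere θ
          have hθ₀ : ‖(θ₀ : EE n)‖ = 1 := norm_eq_of_mem_sphere θ₀
          have hr : ∀ r : ℝ, 0 < r → r • (θ : EE n) ∈ ball (θ₀ : EE n) ε →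
              |r - 1| < ε ∧ θ ∈ ball θ₀ (2 * ε) := by
            intro r hr hb
            rw [mem_ball, dist_eq_norm] at hb
            have h3 : |r - 1| < ε := by
              have := abs_norm_sub_norm_le (r • (θ : EE n)) (θ₀ : EE n)
              rw [norm_smul, hθ, hθ₀, mul_one, Real.norm_of_nonneg hr.le] at this
              linarith
            refine ⟨h3, ?_⟩
            rw [mem_ball, Subtype.dist_eq, dist_eq_norm]
            have h4 : (θ : EE n) - θ₀ = (r • (θ : EE n) - θ₀) + (1 - r) • (θ : EE n) := by
              rw [sub_smul, one_smul]; abel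
            rw [h4]
            refine (norm_add_le _ _).trans_lt ?_
            rw [norm_smul, hθ, mul_one, Real.norm_eq_abs, abs_sub_comm]
            linarith
          by_cases hc : θ ∈ ball θ₀ (2 * ε)
          · simp only [Set.indicator_of_mem hc]
            calc ∫⁻ r in Set.Ioi (0 : ℝ), ENNReal.ofReal (r ^ (n - 1)) *
                  (ball (θ₀ : EE n) ε).indicator (fun _ => 1) (r • (θ : EE n))
                ≤ ∫⁻ r in Set.Ioi (0 : ℝ), (Set.Ioo (1 - ε) (1 + ε)).indicator
                    (fun _ => ENNReal.ofReal (2 ^ (n - 1))) r := by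
                  apply setLIntegral_mono' measurableSet_Ioi
                  intro r (hr0 : 0 < r)
                  by_cases hb : r • (θ : EE n) ∈ ball (θ₀ : EE n) ε
                  · have h3 := abs_lt.1 (hr r hr0 hb).1
                    have h4 : r ∈ Set.Ioo (1 - ε) (1 + ε) := ⟨by linarith, by linarith⟩
                    rw [Set.indicator_of_mem hb, Set.indicator_of_mem h4, mul_one]
                    apply ENNReal.ofReal_le_ofReal
                    gcongr
                    linarith
                  · rw [Set.indicator_of_notMem hb]; simp
              _ ≤ ∫⁻ r, (Set.Ioo (1 - ε) (1 + ε)).indicator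
                    (fun _ => ENNReal.ofReal (2 ^ (n - 1))) r := setLIntegral_le_lintegral _ _
              _ = ENNReal.ofReal (2 ^ n * ε) := by
                  rw [lintegral_indicator measurableSet_Ioo, setLIntegral_const, Real.volume_Ioo,
                    ← ENNReal.ofReal_mul (by positivity)]
                  congr 1
                  obtain ⟨m, rfl⟩ : ∃ m, n = m + 1 := ⟨n - 1, by omega⟩
                  simp only [Nat.add_sub_cancel, pow_succ]; ring
          · rw [Set.indicator_of_notMem hc]
            rw [nonpos_iff_eq_zero, setLIntegral_eq_zero_iff' measurableSet_Ioi]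
            · filter_upwards with r hr0
              rw [Set.indicator_of_notMem (fun hb => hc (hr r hr0 hb).2), mul_zero]
            · apply Measurable.aemeasurable
              apply Measurable.mul (by fun_prop)
              exact (measurable_const.indicator measurableSet_ball).comp (by fun_prop)
      _ = ENNReal.ofReal (2 ^ n * ε) * sig n (ball θ₀ (2 * ε)) := by
          rw [lintegral_indicator measurableSet_ball, setLIntegral_const]
  rw [e0] at key
  have hε : ENNReal.ofReal ε ≠ 0 := by simpa using h0
  rw [← ENNReal.mul_le_mul_iff_right hε (by simp)]
  calc _ = ENNReal.ofReal (ε ^ n) * volume (ball (0 : EE n) 1) := by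
        obtain ⟨m, rfl⟩ : ∃ m, n = m + 1 := ⟨n - 1, by omega⟩
        simp only [Nat.add_sub_cancel, pow_succ]
        rw [ENNReal.ofReal_mul (by positivity)]; ring
    _ ≤ _ := key
    _ = _ := by rw [ENNReal.ofReal_mul (by positivity)]; ring


structure Shape (n : ℕ) (δ lam : ℝ) (g : EE n → ℝ) : Prop where
  hn : 2 ≤ n
  meas : Measurable g
  cont : ∀ x, x ≠ 0 → ContinuousAt g x
  hom : ∀ r : ℝ, 0 < r → ∀ x, g (r • x) = g x
  odd : ∀ x, g (-x) = - g x
  bd : ∀ x, |g x| ≤ δ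
  lip : ∀ x ∈ sphere (0 : EE n) 1, ∀ y ∈ sphere (0 : EE n) 1, |g x - g y| ≤ lam * ‖x - y‖
  δ0 : 0 < δ
  δ1 : δ ≤ 1 / 2
  lam0 : 0 ≤ lam
  lam1 : lam ≤ 1

def rho {n : ℕ} (g : EE n → ℝ) (x : EE n) : ℝ := (1 + g x) ^ (1 / (n : ℝ))

def shp {n : ℕ} (g : EE n → ℝ) : Set (EE n) := {x | ‖x‖ < rho g x}

lemma scale_Ioo {a : ℝ} (ha : 0 < a) (h : ℝ → ℝ≥0∞) :
    ∫⁻ r in Set.Ioo 0 a, h r = ENNReal.ofReal a * ∫⁻ r in Set.Ioo 0 1, h (a * r) := by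
  have := scale_lintegral (volume : Measure ℝ) ha (Set.Ioo 0 1) h
  rw [LinearOrderedField.smul_Ioo ha] at this
  simpa using this

namespace Shape

lemma half {n : ℕ} {δ lam : ℝ} {g : EE n → ℝ} (H : Shape n δ lam g) (x : EE n) : |g x| ≤ 1 / 2 := (H.bd x).trans H.δ1

lemma onepos {n : ℕ} {δ lam : ℝ} {g : EE n → ℝ} (H : Shape n δ lam g) (x : EE n) : 1 / 2 ≤ 1 + g x := by
  have := abs_le.1 (H.half x); linarith

lemma onele {n : ℕ} {δ lam : ℝ} {g : EE n → ℝ} (H : Shape n δ lam g) (x : EE n) : 1 + g x ≤ 3 / 2 := by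
  have := abs_le.1 (H.half x); linarith

lemma n0 {n : ℕ} {δ lam : ℝ} {g : EE n → ℝ} (H : Shape n δ lam g) : (0 : ℝ) < n := by have := H.hn; positivity

lemma rho_pos {n : ℕ} {δ lam : ℝ} {g : EE n → ℝ} (H : Shape n δ lam g) (x : EE n) : 0 < rho g x :=
  Real.rpow_pos_of_pos (by linarith [H.onepos x]) _

lemma rho_pow {n : ℕ} {δ lam : ℝ} {g : EE n → ℝ} (H : Shape n δ lam g) (x : EE n) (p : ℝ) : rho g x ^ p = (1 + g x) ^ (p / n) := by
  rw [rho, ← Real.rpow_mul (by linarith [H.onepos x])]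
  congr 1; ring

lemma rho_pow_n {n : ℕ} {δ lam : ℝ} {g : EE n → ℝ} (H : Shape n δ lam g) (x : EE n) : rho g x ^ n = 1 + g x := by
  rw [← Real.rpow_natCast, H.rho_pow, div_self H.n0.ne', Real.rpow_one]

lemma rho_meas {n : ℕ} {δ lam : ℝ} {g : EE n → ℝ} (H : Shape n δ lam g) : Measurable (rho g) := by
  have := H.meas
  unfold rho; fun_prop

lemma rho_hom {n : ℕ} {δ lam : ℝ} {g : EE n → ℝ} (H : Shape n δ lam g) (r : ℝ) (hr : 0 < r) (x : EE n) : rho g (r • x) = rho g x := by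
  rw [rho, H.hom r hr, rho]

lemma rho_ge {n : ℕ} {δ lam : ℝ} {g : EE n → ℝ} (H : Shape n δ lam g) (x : EE n) : 1 / 2 ≤ rho g x := by
  by_contra! h
  have h1 := H.rho_pow_n x
  have h2 : rho g x ^ n < (1 / 2) ^ n :=
    pow_lt_pow_left₀ h (H.rho_pos x).le (by have := H.hn; omega)
  have h3 : ((1 : ℝ) / 2) ^ n ≤ (1 / 2) ^ 1 :=
    pow_le_pow_of_le_one (by norm_num) (by norm_num) (by have := H.hn; omega)
  have := H.onepos x
  linarith

lemma rho_le {n : ℕ} {δ lam : ℝ} {g : EE n → ℝ} (H : Shape n δ lam g) (x : EE n) : rho g x ≤ 3 / 2 := by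
  by_contra! h
  have h1 := H.rho_pow_n x
  have h2 : (3 / 2 : ℝ) ^ n < rho g x ^ n:=
    pow_lt_pow_left₀ h (by norm_num) (by have := H.hn; omega)
  have h3 : ((3 : ℝ) / 2) ^ 1 ≤ (3 / 2) ^ n :=
    pow_le_pow_right₀ (by norm_num) (by have := H.hn; omega)
  have := H.onele x
  linarith

lemma meas_shp {n : ℕ} {δ lam : ℝ} {g : EE n → ℝ} (H : Shape n δ lam g) : MeasurableSet (shp g) := measurableSet_lt measurable_norm H.rho_meas

end Shape

def wpot {n : ℕ} (β A : ℝ) (θ : SS n) : ℝ≥0∞ :=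
  ∫⁻ r in Set.Ioo (0 : ℝ) 1,
      ENNReal.ofReal (r ^ (n - 1)) * ENNReal.ofReal (A * ‖r • (θ : EE n)‖ ^ β)

lemma wpot_meas {n : ℕ} (β A : ℝ) : Measurable (wpot (n := n) β A) := by
  unfold wpot
  apply Measurable.lintegral_prod_right'
    (f := fun p : SS n × ℝ => ENNReal.ofReal (p.2 ^ (n - 1)) * ENNReal.ofReal (A * ‖p.2 • (p.1 : EE n)‖ ^ β))
  fun_prop

lemma pot_ball {n : ℕ} (hn : 2 ≤ n) (β A : ℝ) :
    potEnergy β A (ball (0 : EE n) 1) = ∫⁻ θ : SS n, wpot β A θ ∂(sig n) := by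
  have := polar_set hn (fun x : EE n => ENNReal.ofReal (A * ‖x‖ ^ β)) (by fun_prop) (fun _ => 1)
    measurable_const (fun _ _ _ => rfl)
  rw [potEnergy]
  have e : ball (0 : EE n) 1 = {x | ‖x‖ < 1} := by ext x; simp
  rw [e, this]
  rfl

lemma pot_shp {n : ℕ} {δ lam : ℝ} {g : EE n → ℝ} (H : Shape n δ lam g) (β A : ℝ) :
    potEnergy β A (shp g) =
      ∫⁻ θ : SS n, ENNReal.ofReal ((1 + g θ) ^ (1 + β / n)) * wpot β A θ ∂(sig n) := by
  have := polar_set H.hn (fun x : EE n => ENNReal.ofReal (A * ‖x‖ ^ β)) (by fun_prop) (rho g)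
    H.rho_meas H.rho_hom
  rw [potEnergy, shp, this]
  apply lintegral_congr
  intro θ
  have hp := H.rho_pos θ
  rw [scale_Ioo hp, wpot]
  have e : ∀ r ∈ Set.Ioo (0 : ℝ) 1, ENNReal.ofReal ((rho g θ * r) ^ (n - 1)) *
      ENNReal.ofReal (A * ‖(rho g θ * r) • (θ : EE n)‖ ^ β) =
      ENNReal.ofReal (rho g θ ^ ((n : ℝ) - 1 + β)) * (ENNReal.ofReal (r ^ (n - 1)) *
        ENNReal.ofReal (A * ‖r • (θ : EE n)‖ ^ β)) := by
    intro r hr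
    have hr0 : 0 < r := hr.1
    have hr1 : r < 1 := hr.2
    rw [← ENNReal.ofReal_mul (by positivity), ← ENNReal.ofReal_mul (by positivity),
      ← ENNReal.ofReal_mul (by positivity)]
    congr 1
    simp only [norm_smul, norm_eq_of_mem_sphere, mul_one, Real.norm_eq_abs]
    rw [abs_of_pos (by positivity), abs_of_pos hr0, Real.mul_rpow hp.le hr0.le, Real.rpow_add hp,
      mul_pow, ← Real.rpow_natCast (rho g θ), Nat.cast_sub (by have := H.hn; omega)]
    push_cast; ring
  rw [setLIntegral_congr_fun measurableSet_Ioo e, lintegral_const_mul' _ _ (by simp), ← mul_assoc,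
    ← ENNReal.ofReal_mul (by positivity)]
  congr 2
  nth_rewrite 1 [← Real.rpow_one (rho g θ)]
  rw [← Real.rpow_add hp, H.rho_pow]
  congr 1
  have := H.n0
  field_simp; ring

lemma wpot_neg {n : ℕ} (β A : ℝ) (θ : SS n) : wpot β A (-θ) = wpot β A θ := by
  simp [wpot]

lemma two_ofReal (x : ℝ) : (2 : ℝ≥0∞) * ENNReal.ofReal x = ENNReal.ofReal (2 * x) := by
  rw [ENNReal.ofReal_mul (by norm_num), ENNReal.ofReal_ofNat]

lemma symm_bound {n : ℕ} {δ lam : ℝ} {g : EE n → ℝ} (H : Shape n δ lam g) {q : ℝ}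
    (hq : 0 ≤ q) (hq1 : q ≤ 1) (θ : SS n) :
    ENNReal.ofReal ((1 + g θ) ^ (1 + q)) + ENNReal.ofReal ((1 + g (-θ : SS n)) ^ (1 + q)) ≤
      2 * ENNReal.ofReal (1 + δ ^ 2) := by
  have hb := bern hq hq1 (H.half θ)
  have h1 := H.onepos θ
  have h2 := H.onele θ
  rw [← ENNReal.ofReal_add (Real.rpow_nonneg (by linarith) _)
    (Real.rpow_nonneg (by linarith [H.onepos (-θ : SS n)]) _)]
  rw [two_ofReal]
  apply ENNReal.ofReal_le_ofReal
  have h3 : g ((-θ : SS n) : EE n) = - g θ := by rw [← H.odd]; simp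
  rw [h3, ← sub_eq_add_neg]
  refine hb.trans ?_
  have : g θ ^ 2 ≤ δ ^ 2 := by
    rw [← sq_abs]; exact pow_le_pow_left₀ (abs_nonneg _) (H.bd θ) 2
  linarith

lemma pot_le {n : ℕ} {δ lam : ℝ} {g : EE n → ℝ} (H : Shape n δ lam g) {β : ℝ} (A : ℝ)
    (hβ : 0 ≤ β) (hβ1 : β ≤ n) :
    potEnergy β A (shp g) ≤ ENNReal.ofReal (1 + δ ^ 2) * potEnergy β A (ball (0 : EE n) 1) := by
  rw [pot_shp H, pot_ball H.hn]
  have hm := H.meas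
  have := H.n0
  exact symm_le neg_toSphere (by fun_prop) (wpot_meas β A) (wpot_neg β A)
    (symm_bound H (by positivity) (by rw [div_le_one this]; exact hβ1))

lemma vol_pot {n : ℕ} (F : Set (EE n)) : potEnergy 0 1 F = volume F := by
  simp [potEnergy]

lemma vol_eq {n : ℕ} {δ lam : ℝ} {g : EE n → ℝ} (H : Shape n δ lam g) :
    volume (shp g) = volume (ball (0 : EE n) 1) := by
  rw [← vol_pot, ← vol_pot, pot_shp H, pot_ball H.hn]
  have hm := H.meas
  refine symm_eq neg_toSphere (by fun_prop) (wpot_meas _ _) (wpot_neg _ _) ?_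
  intro θ
  have h1 := H.onepos θ
  have h2 := H.onele θ
  have h3 : g ((-θ : SS n) : EE n) = - g θ := by rw [← H.odd]; simp
  simp only [h3, zero_div, add_zero, Real.rpow_one]
  rw [← ENNReal.ofReal_add (by linarith) (by linarith)]
  ring_nf
  simp


def kerR {n : ℕ} (α : ℝ) (θ φ : SS n) (r s : ℝ) : ℝ≥0∞ :=
  ENNReal.ofReal (r ^ (n - 1)) * (ENNReal.ofReal (s ^ (n - 1)) *
    ENNReal.ofReal (‖r • (θ : EE n) - s • (φ : EE n)‖ ^ (α - (n : ℝ))))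

def I3 {n : ℕ} (α : ℝ) (θ φ : SS n) (X Y : Set ℝ) : ℝ≥0∞ :=
  ∫⁻ r in X, ∫⁻ s in Y, kerR α θ φ r s

lemma ker_meas {n : ℕ} (α : ℝ) :
    Measurable (fun p : (SS n × SS n) × ℝ × ℝ => kerR α p.1.1 p.1.2 p.2.1 p.2.2) := by
  unfold kerR; fun_prop

lemma ker_meas2 {n : ℕ} (α : ℝ) (θ φ : SS n) :
    Measurable (fun p : ℝ × ℝ => kerR α θ φ p.1 p.2) := by
  unfold kerR; fun_prop

lemma ker_meas3 {n : ℕ} (α : ℝ) (θ φ : SS n) (r : ℝ) :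
    Measurable (fun s : ℝ => kerR α θ φ r s) := by
  unfold kerR; fun_prop

lemma norm_sq_aux {n : ℕ} (θ φ : SS n) (r s : ℝ) :
    ‖r • (θ : EE n) - s • (φ : EE n)‖ ^ 2 =
      (r - s) ^ 2 + r * s * ‖(θ : EE n) - (φ : EE n)‖ ^ 2 := by
  rw [norm_sub_sq_real, norm_sub_sq_real]
  simp only [norm_smul, norm_eq_of_mem_sphere, mul_one, Real.norm_eq_abs, sq_abs, inner_smul_left,
    inner_smul_right]
  simp; ring

lemma norm_swap_aux {n : ℕ} (θ φ : SS n) (r s : ℝ) :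
    ‖r • (θ : EE n) - s • (φ : EE n)‖ = ‖s • (θ : EE n) - r • (φ : EE n)‖ := by
  rw [← sq_eq_sq₀ (norm_nonneg _) (norm_nonneg _), norm_sq_aux, norm_sq_aux]; ring

lemma ker_swap {n : ℕ} (α : ℝ) (θ φ : SS n) (r s : ℝ) : kerR α θ φ r s = kerR α θ φ s r := by
  unfold kerR; rw [norm_swap_aux]; ring

lemma ker_swap2 {n : ℕ} (α : ℝ) (θ φ : SS n) (r s : ℝ) : kerR α φ θ r s = kerR α θ φ r s := by
  unfold kerR; rw [norm_swap_aux, norm_sub_rev]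

lemma ker_neg {n : ℕ} (α : ℝ) (θ φ : SS n) (r s : ℝ) : kerR α (-θ) (-φ) r s = kerR α θ φ r s := by
  unfold kerR
  have : r • ((-θ : SS n) : EE n) - s • ((-φ : SS n) : EE n)
    = -(r • (θ : EE n) - s • (φ : EE n)) := by simp; abel
  rw [this, norm_neg]

lemma I3_swap {n : ℕ} (α : ℝ) (θ φ : SS n) (X Y : Set ℝ) : I3 α θ φ X Y = I3 α θ φ Y X := by
  unfold I3
  rw [lintegral_lintegral_swap (ker_meas2 α θ φ).aemeasurable]
  simp only [ker_swap α θ φ]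

lemma I3_swap2 {n : ℕ} (α : ℝ) (θ φ : SS n) (X Y : Set ℝ) : I3 α φ θ X Y = I3 α θ φ X Y := by
  unfold I3; simp only [ker_swap2 α θ φ]

lemma I3_neg {n : ℕ} (α : ℝ) (θ φ : SS n) (X Y : Set ℝ) : I3 α (-θ) (-φ) X Y = I3 α θ φ X Y := by
  unfold I3; simp only [ker_neg α θ φ]

lemma inner_meas {n : ℕ} (α : ℝ) (B : Set ((SS n × SS n) × ℝ)) (hB : MeasurableSet B) :
    Measurable (fun q : (SS n × SS n) × ℝ =>
      ∫⁻ s in {s | (q.1, s) ∈ B}, kerR α q.1.1 q.1.2 q.2 s) := by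
  have h1 : ∀ q : (SS n × SS n) × ℝ, ∫⁻ s in {s | (q.1, s) ∈ B}, kerR α q.1.1 q.1.2 q.2 s =
      ∫⁻ s, {z : ((SS n × SS n) × ℝ) × ℝ | (z.1.1, z.2) ∈ B}.indicator
        (fun z => kerR α z.1.1.1 z.1.1.2 z.1.2 z.2) (q, s) := by
    intro q
    have hm : MeasurableSet {s | (q.1, s) ∈ B} :=
      (by fun_prop : Measurable fun s : ℝ => (q.1, s)) hB
    rw [← lintegral_indicator hm]
    rfl
  simp only [h1]
  apply Measurable.lintegral_prod_right'
  apply Measurable.indicator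
  · unfold kerR; fun_prop
  · exact (by fun_prop : Measurable fun z : ((SS n × SS n) × ℝ) × ℝ => (z.1.1, z.2)) hB

lemma I3_meas {n : ℕ} (α : ℝ) (A B : Set ((SS n × SS n) × ℝ)) (hA : MeasurableSet A)
    (hB : MeasurableSet B) :
    Measurable (fun p : SS n × SS n => I3 α p.1 p.2 {r | (p, r) ∈ A} {s | (p, s) ∈ B}) := by
  unfold I3
  have h1 : ∀ p : SS n × SS n,
      (∫⁻ r in {r | (p, r) ∈ A}, ∫⁻ s in {s | (p, s) ∈ B}, kerR α p.1 p.2 r s) =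
      ∫⁻ r, A.indicator (fun q : (SS n × SS n) × ℝ =>
      ∫⁻ s in {s | (q.1, s) ∈ B}, kerR α q.1.1 q.1.2 q.2 s) (p, r) := by
    intro p
    have hm : MeasurableSet {s | (p, s) ∈ A} :=
      (by fun_prop : Measurable fun s : ℝ => (p, s)) hA
    rw [← lintegral_indicator hm]
    rfl
  simp only [h1]
  apply Measurable.lintegral_prod_right'
  exact (inner_meas α B hB).indicator hA

lemma I3_meas_Ioo {n : ℕ} (α : ℝ) (u v : SS n × SS n → ℝ) (hu : Measurable u) (hv : Measurable v) :
    Measurable (fun p : SS n × SS n => I3 α p.1 p.2 (Set.Ioo 0 (u p)) (Set.Ioo 0 (v p))) := by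
  have h : ∀ u : SS n × SS n → ℝ, Measurable u →
      MeasurableSet {q : (SS n × SS n) × ℝ | q.2 ∈ Set.Ioo 0 (u q.1)} := by
    intro u hu
    exact (measurableSet_lt measurable_const measurable_snd).inter
      (measurableSet_lt measurable_snd (hu.comp measurable_fst))
  exact I3_meas α _ _ (h u hu) (h v hv)

lemma riesz_formula {n : ℕ} (hn : 2 ≤ n) (α : ℝ)
    (ρ : EE n → ℝ) (hρ : Measurable ρ) (hh : ∀ r : ℝ, 0 < r → ∀ x, ρ (r • x) = ρ x) :
    rieszEnergy α {x | ‖x‖ < ρ x} =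
      ∫⁻ θ : SS n, (∫⁻ φ : SS n, I3 α θ φ (Set.Ioo 0 (ρ θ)) (Set.Ioo 0 (ρ φ)) ∂(sig n)) ∂(sig n) := by
  have hm : Measurable (fun x : EE n =>
      ∫⁻ y in {x | ‖x‖ < ρ x}, ENNReal.ofReal (‖x - y‖ ^ (α - (n : ℝ)))) := by
    apply Measurable.lintegral_prod_right'
      (f := fun p : EE n × EE n => ENNReal.ofReal (‖p.1 - p.2‖ ^ (α - (n : ℝ))))
    fun_prop
  rw [rieszEnergy, polar_set hn _ hm ρ hρ hh]
  apply lintegral_congr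
  intro θ
  have e1 : ∀ r : ℝ, ENNReal.ofReal (r ^ (n - 1)) *
      ∫⁻ y in {x | ‖x‖ < ρ x}, ENNReal.ofReal (‖r • (θ : EE n) - y‖ ^ (α - (n : ℝ))) =
      ∫⁻ φ : SS n, (∫⁻ s in Set.Ioo 0 (ρ φ), kerR α θ φ r s) ∂(sig n) := by
    intro r
    rw [polar_set hn _ (by fun_prop) ρ hρ hh, ← lintegral_const_mul' _ _ (by simp)]
    apply lintegral_congr
    intro φ
    rw [← lintegral_const_mul' _ _ (by simp)]
    rfl
  simp only [e1]
  rw [lintegral_lintegral_swap]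
  · rfl
  · apply Measurable.aemeasurable
    have := (inner_meas α {q : (SS n × SS n) × ℝ | q.2 ∈ Set.Ioo 0 (ρ q.1.2)}
      ((measurableSet_lt measurable_const measurable_snd).inter
      (measurableSet_lt measurable_snd (hρ.comp (by fun_prop))))).comp
      (by fun_prop : Measurable fun p : ℝ × SS n => ((θ, p.2), p.1))
    exact this

lemma I3_union_left {n : ℕ} (α : ℝ) (θ φ : SS n) {X Y Z : Set ℝ} (hY : MeasurableSet Y)
    (hd : Disjoint X Y) : I3 α θ φ (X ∪ Y) Z = I3 α θ φ X Z + I3 α θ φ Y Z :=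
  lintegral_union hY hd

lemma I3_union_right {n : ℕ} (α : ℝ) (θ φ : SS n) {X Y Z : Set ℝ} (hY : MeasurableSet Y)
    (hd : Disjoint X Y) : I3 α θ φ Z (X ∪ Y) = I3 α θ φ Z X + I3 α θ φ Z Y := by
  rw [I3_swap, I3_union_left _ _ _ hY hd, I3_swap _ _ _ X, I3_swap _ _ _ Y]

lemma I3_ident_aux {n : ℕ} (α : ℝ) (θ φ : SS n) {a b : ℝ} (ha : 0 < a) (hab : a ≤ b) :
    I3 α θ φ (Set.Ioo 0 a) (Set.Ioo 0 b) + I3 α θ φ (Set.Ioo 0 a) (Set.Ioo 0 b) +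
      I3 α θ φ (Set.Ico a b) (Set.Ico a b) =
    I3 α θ φ (Set.Ioo 0 a) (Set.Ioo 0 a) + I3 α θ φ (Set.Ioo 0 b) (Set.Ioo 0 b) := by
  have hu : Set.Ioo 0 b = Set.Ioo 0 a ∪ Set.Ico a b := by
    ext x; simp only [Set.mem_Ioo, Set.mem_union, Set.mem_Ico]
    constructor
    · rintro ⟨h1, h2⟩
      rcases lt_or_ge x a with h | h
      · exact Or.inl ⟨h1, h⟩
      · exact Or.inr ⟨h, h2⟩
    · rintro (h | h)
      · exact ⟨h.1, by linarith [h.2]⟩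
      · exact ⟨by linarith [h.1], h.2⟩
  have hd : Disjoint (Set.Ioo 0 a) (Set.Ico a b) := by
    rw [Set.disjoint_left]; intro x hx hx2; exact absurd hx.2 (not_lt.2 hx2.1)
  rw [hu, I3_union_right _ _ _ measurableSet_Ico hd, I3_union_left _ _ _ measurableSet_Ico hd,
    I3_union_right _ _ _ measurableSet_Ico hd, I3_union_right _ _ _ measurableSet_Ico hd,
    I3_swap α θ φ (Set.Ico a b) (Set.Ioo 0 a)]
  ring

lemma I3_ident {n : ℕ} (α : ℝ) (θ φ : SS n) {a b : ℝ} (ha : 0 < a) (hb : 0 < b) :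
    (I3 α θ φ (Set.Ioo 0 a) (Set.Ioo 0 b) + I3 α θ φ (Set.Ioo 0 a) (Set.Ioo 0 b)) +
      I3 α θ φ (Set.Ico (min a b) (max a b)) (Set.Ico (min a b) (max a b)) =
    I3 α θ φ (Set.Ioo 0 a) (Set.Ioo 0 a) + I3 α θ φ (Set.Ioo 0 b) (Set.Ioo 0 b) := by
  rcases le_total a b with h | h
  · rw [min_eq_left h, max_eq_right h, I3_ident_aux α θ φ ha h]
  · rw [min_eq_right h, max_eq_left h, I3_swap α θ φ (Set.Ioo 0 a) (Set.Ioo 0 b),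
      I3_ident_aux α θ φ hb h, add_comm]

lemma I3_scale {n : ℕ} (hn : 2 ≤ n) (α : ℝ) (θ φ : SS n) {a : ℝ} (ha : 0 < a) :
    I3 α θ φ (Set.Ioo 0 a) (Set.Ioo 0 a) =
      ENNReal.ofReal (a ^ ((n : ℝ) + α)) * I3 α θ φ (Set.Ioo 0 1) (Set.Ioo 0 1) := by
  unfold I3
  simp only [scale_Ioo ha]
  have e : ∀ r ∈ Set.Ioo (0 : ℝ) 1, ENNReal.ofReal a * ∫⁻ s in Set.Ioo (0 : ℝ) 1,
      kerR α θ φ (a * r) (a * s) =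
      ENNReal.ofReal (a ^ ((n : ℝ) + α - 1)) * ∫⁻ s in Set.Ioo (0 : ℝ) 1, kerR α θ φ r s := by
    intro r hr
    rw [← lintegral_const_mul' _ _ (by simp), ← lintegral_const_mul' _ _ (by simp)]
    apply setLIntegral_congr_fun measurableSet_Ioo
    intro s hs
    have hr0 : 0 < r := hr.1
    have hs0 : 0 < s := hs.1
    have e0 : ‖(a * r) • (θ : EE n) - (a * s) • (φ : EE n)‖ =
        a * ‖r • (θ : EE n) - s • (φ : EE n)‖ := by
      rw [mul_smul, mul_smul, ← smul_sub, norm_smul, Real.norm_of_nonneg ha.le]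
    simp only [kerR]
    rw [e0, Real.mul_rpow ha.le (norm_nonneg _), mul_pow, mul_pow,
      ENNReal.ofReal_mul (by positivity), ENNReal.ofReal_mul (by positivity),
      ENNReal.ofReal_mul (by positivity)]
    have e3 : ENNReal.ofReal (a ^ ((n : ℝ) + α - 1)) = ENNReal.ofReal a *
        (ENNReal.ofReal (a ^ (n - 1)) * (ENNReal.ofReal (a ^ (n - 1)) *
          ENNReal.ofReal (a ^ (α - n)))) := by
      rw [← ENNReal.ofReal_mul (by positivity), ← ENNReal.ofReal_mul (by positivity),
        ← ENNReal.ofReal_mul (by positivity)]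
      congr 1
      nth_rewrite 2 [← Real.rpow_one a]
      rw [← Real.rpow_natCast a, ← Real.rpow_add ha, ← Real.rpow_add ha, ← Real.rpow_add ha,
        Nat.cast_sub (by omega)]
      congr 1; push_cast; ring
    rw [e3]; ring
  rw [setLIntegral_congr_fun measurableSet_Ioo e, lintegral_const_mul' _ _ (by simp), ← mul_assoc,
    ← ENNReal.ofReal_mul ha.le]
  congr 2
  nth_rewrite 1 [← Real.rpow_one a]
  rw [← Real.rpow_add ha]
  congr 1; ring


lemma Shape.rho_diff_le {n : ℕ} {δ lam : ℝ} {g : EE n → ℝ} (H : Shape n δ lam g) (x y : EE n) :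
    |rho g x - rho g y| ≤ |g x - g y| := by
  wlog h : rho g y ≤ rho g x generalizing x y
  · rw [abs_sub_comm, abs_sub_comm (g x)]; exact this y x (le_of_not_ge h)
  have hn := H.hn
  set b := rho g y with hb
  set a := rho g x with ha
  have hb0 : 0 < b := H.rho_pos y
  have ha0 : 0 < a := H.rho_pos x
  have hbn : 1 / 2 ≤ b ^ n := by rw [hb, H.rho_pow_n]; exact H.onepos y
  have hbn1 : 1 / 2 ≤ b ^ (n - 1) := by
    rcases le_total b 1 with h1 | h1
    · exact hbn.trans (pow_le_pow_of_le_one hb0.le h1 (by omega))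
    · have := one_le_pow₀ (n := n - 1) h1
      linarith
  have e : g x - g y = a ^ n - b ^ n := by
    rw [ha, hb, H.rho_pow_n, H.rho_pow_n]; ring
  have e2 : a - b ≤ a ^ n - b ^ n := by
    have h1 := one_add_mul_sub_le_pow (a := a / b) (by have : 0 ≤ a / b := by positivity
                                                       linarith) n
    have h2 : b ^ n * (1 + n * (a / b - 1)) ≤ a ^ n := by
      calc _ ≤ b ^ n * (a / b) ^ n := by gcongr
        _ = a ^ n := by rw [← mul_pow, mul_div_cancel₀ _ hb0.ne']
    have h3 : b ^ n * (1 + n * (a / b - 1)) = b ^ n + (n * b ^ (n - 1)) * (a - b) := by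
      obtain ⟨m, rfl⟩ : ∃ m, n = m + 1 := ⟨n - 1, by omega⟩
      simp only [Nat.add_sub_cancel, pow_succ]
      field_simp
    have h4 : 1 ≤ n * b ^ (n - 1) := by
      have : (2 : ℝ) ≤ n := by exact_mod_cast hn
      nlinarith
    nlinarith
  rw [e, abs_of_nonneg (by linarith)]
  exact e2.trans (le_abs_self _)

lemma Shape.g_diff_le {n : ℕ} {δ lam : ℝ} {g : EE n → ℝ} (H : Shape n δ lam g) (x y : EE n) :
    |g x - g y| ≤ (n * 2 ^ n) * |rho g x - rho g y| := by
  have e : g x - g y = rho g x ^ n - rho g y ^ n := by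
    rw [H.rho_pow_n, H.rho_pow_n]; ring
  rw [e]
  refine (abs_pow_sub_pow_le _ _ n).trans ?_
  rw [abs_of_pos (H.rho_pos x), abs_of_pos (H.rho_pos y)]
  have h1 : max (rho g x) (rho g y) ≤ 2 :=
    max_le (by linarith [H.rho_le x]) (by linarith [H.rho_le y])
  have h2 : max (rho g x) (rho g y) ^ (n - 1) ≤ 2 ^ n := by
    calc _ ≤ (2 : ℝ) ^ (n - 1) := by
          gcongr
          exact le_max_of_le_left (H.rho_pos x).le
      _ ≤ 2 ^ n := pow_le_pow_right₀ (by norm_num) (by omega)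
  calc _ ≤ |rho g x - rho g y| * n * 2 ^ n := by gcongr
    _ = _ := by ring

def cV (n : ℕ) (α : ℝ) : ℝ :=
  (1 / 2) ^ (n - 1) * ((1 / 2) ^ (n - 1) * 3 ^ (α - (n : ℝ))) / (n * 2 ^ n) ^ 2

lemma cV_pos {n : ℕ} (hn : 2 ≤ n) (α : ℝ) : 0 < cV n α := by
  unfold cV; positivity

lemma D_lower {n : ℕ} {δ lam : ℝ} {g : EE n → ℝ} (H : Shape n δ lam g) {α : ℝ} (hα : α < n)
    (θ φ : SS n) :
    ENNReal.ofReal (cV n α * ((g θ - g φ) ^ 2 * ‖(θ : EE n) - φ‖ ^ (α - (n : ℝ)))) ≤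
      I3 α θ φ (Set.Ico (min (rho g θ) (rho g φ)) (max (rho g θ) (rho g φ)))
        (Set.Ico (min (rho g θ) (rho g φ)) (max (rho g θ) (rho g φ))) := by
  rcases eq_or_ne θ φ with rfl | hne
  · simp
  set m := min (rho g θ) (rho g φ) with hm
  set M := max (rho g θ) (rho g φ) with hM
  have hd : 0 < ‖(θ : EE n) - φ‖ := by
    rw [norm_pos_iff, sub_ne_zero]; exact fun h => hne (Subtype.ext h)
  have hmM : M - m = |rho g θ - rho g φ| := by rw [hm, hM]; exact max_sub_min_eq_abs' _ _
  have hm2 : 1 / 2 ≤ m := le_min (H.rho_ge _) (H.rho_ge _)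
  have hM2 : M ≤ 3 / 2 := max_le (H.rho_le _) (H.rho_le _)
  have hMd : M - m ≤ ‖(θ : EE n) - φ‖ := by
    rw [hmM]
    refine (H.rho_diff_le _ _).trans ((H.lip _ θ.2 _ φ.2).trans ?_)
    have := H.lam1
    nlinarith
  set κ : ℝ := (1 / 2) ^ (n - 1) * ((1 / 2) ^ (n - 1) *
    (3 ^ (α - (n : ℝ)) * ‖(θ : EE n) - φ‖ ^ (α - (n : ℝ)))) with hκ
  have hκ0 : 0 ≤ κ := by positivity
  have hk : ∀ r ∈ Set.Ico m M, ∀ s ∈ Set.Ico m M, ENNReal.ofReal κ ≤ kerR α θ φ r s := by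
    intro r hr s hs
    have hr0 : 1 / 2 ≤ r := hm2.trans hr.1
    have hs0 : 1 / 2 ≤ s := hm2.trans hs.1
    have hr1 : r ≤ 3 / 2 := hr.2.le.trans hM2
    have hs1 : s ≤ 3 / 2 := hs.2.le.trans hM2
    have hrs : (r - s) ^ 2 ≤ ‖(θ : EE n) - φ‖ ^ 2 := by
      apply sq_le_sq'
      · linarith [hr.1, hs.2]
      · linarith [hr.2, hs.1]
    have hsq := norm_sq_aux θ φ r s
    have hpos : 0 < ‖r • (θ : EE n) - s • (φ : EE n)‖ := by
      have hrs0 : 0 < r * s := by nlinarith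
      have h9 : 0 < r * s * ‖(θ : EE n) - φ‖ ^ 2 := by positivity
      by_contra h
      have h0 := le_antisymm (not_lt.1 h) (norm_nonneg _)
      rw [h0] at hsq
      nlinarith [sq_nonneg (r - s)]
    have hle : ‖r • (θ : EE n) - s • (φ : EE n)‖ ≤ 3 * ‖(θ : EE n) - φ‖ := by
      rw [← sq_le_sq₀ (norm_nonneg _) (by positivity), hsq]
      have : r * s ≤ 8 := by nlinarith
      nlinarith [sq_nonneg ‖(θ : EE n) - φ‖]
    unfold kerR
    rw [hκ, ← ENNReal.ofReal_mul (by positivity), ← ENNReal.ofReal_mul (by positivity)]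
    apply ENNReal.ofReal_le_ofReal
    rw [← Real.mul_rpow (by norm_num) hd.le]
    have := Real.rpow_le_rpow_of_nonpos hpos hle (by linarith : α - (n : ℝ) ≤ 0)
    gcongr
  calc ENNReal.ofReal (cV n α * ((g θ - g φ) ^ 2 * ‖(θ : EE n) - φ‖ ^ (α - (n : ℝ))))
      ≤ ENNReal.ofReal (κ * (M - m) * (M - m)) := by
        apply ENNReal.ofReal_le_ofReal
        have h1 := H.g_diff_le θ φ
        rw [← hmM] at h1
        have h2 : (g θ - g φ) ^ 2 ≤ ((n * 2 ^ n) * (M - m)) ^ 2 := by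
          rw [← sq_abs]; exact pow_le_pow_left₀ (abs_nonneg _) h1 2
        have hn0 := H.n0
        have h3 : cV n α * ((((n : ℝ) * 2 ^ n) * (M - m)) ^ 2 *
            ‖(θ : EE n) - φ‖ ^ (α - (n : ℝ))) = κ * (M - m) * (M - m) := by
          rw [cV, hκ]; field_simp
        rw [← h3]
        have := (cV_pos H.hn α).le
        gcongr
    _ = ∫⁻ r in Set.Ico m M, ∫⁻ s in Set.Ico m M, ENNReal.ofReal κ := by
        simp only [setLIntegral_const, Real.volume_Ico]
        have : 0 ≤ M - m := by rw [hmM]; positivity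
        rw [ENNReal.ofReal_mul (by positivity), ENNReal.ofReal_mul hκ0]
    _ ≤ _ := by
        apply setLIntegral_mono' measurableSet_Ico
        intro r hr
        apply setLIntegral_mono' measurableSet_Ico
        intro s hs
        exact hk r hr s hs

def JJ {n : ℕ} (α : ℝ) (g : EE n → ℝ) : ℝ≥0∞ :=
  ∫⁻ θ : SS n, (∫⁻ φ : SS n,
    ENNReal.ofReal (cV n α * ((g θ - g φ) ^ 2 * ‖(θ : EE n) - φ‖ ^ (α - (n : ℝ)))) ∂(sig n)) ∂(sig n)



lemma abs_main {X : Type*} [MeasurableSpace X] (ν : Measure X) [SFinite ν]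
    (f q p j : X → X → ℝ≥0∞) (mf : Measurable (Function.uncurry f))
    (mq : Measurable (Function.uncurry q)) (mp : Measurable (Function.uncurry p))
    (h : ∀ x y, f x y + f x y + j x y ≤ q x y + p x y) (hs : ∀ x y, p x y = q y x) :
    2 * (∫⁻ x, ∫⁻ y, f x y ∂ν ∂ν) + ∫⁻ x, ∫⁻ y, j x y ∂ν ∂ν ≤ 2 * ∫⁻ x, ∫⁻ y, q x y ∂ν ∂ν := by
  have Q2 : ∫⁻ x, ∫⁻ y, p x y ∂ν ∂ν = ∫⁻ x, ∫⁻ y, q x y ∂ν ∂ν := by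
    rw [lintegral_lintegral_swap mp.aemeasurable]
    simp only [hs]
  have m1 : Measurable (fun x => ∫⁻ y, f x y ∂ν) := Measurable.lintegral_prod_right' mf
  have m2 : Measurable (fun x => ∫⁻ y, q x y ∂ν) := Measurable.lintegral_prod_right' mq
  have n1 : ∀ x, Measurable (f x) := fun x => mf.comp measurable_prodMk_left
  have n2 : ∀ x, Measurable (q x) := fun x => mq.comp measurable_prodMk_left
  rw [two_mul, two_mul]
  nth_rewrite 2 [← Q2]
  rw [← lintegral_add_left m1, ← lintegral_add_left (m1.fun_add m1), ← lintegral_add_left m2]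
  apply lintegral_mono
  intro x
  dsimp only
  rw [← lintegral_add_left (n1 x), ← lintegral_add_left ((n1 x).fun_add (n1 x)),
    ← lintegral_add_left (n2 x)]
  exact lintegral_mono (h x)

def h1 {n : ℕ} (α : ℝ) (θ : SS n) : ℝ≥0∞ :=
  ∫⁻ φ : SS n, I3 α θ φ (Set.Ioo 0 1) (Set.Ioo 0 1) ∂(sig n)

lemma mI {n : ℕ} (α : ℝ) :
    Measurable (fun p : SS n × SS n => I3 α p.1 p.2 (Set.Ioo 0 1) (Set.Ioo 0 1)) :=
  I3_meas_Ioo (n := n) α (fun _ => 1) (fun _ => 1) measurable_const measurable_const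

lemma h1_meas {n : ℕ} (α : ℝ) : Measurable (h1 (n := n) α) := by
  unfold h1
  exact Measurable.lintegral_prod_right' (mI α)

lemma mI2 {n : ℕ} (α : ℝ) (θ : SS n) :
    Measurable (fun φ : SS n => I3 α θ φ (Set.Ioo 0 1) (Set.Ioo 0 1)) := by
  have h := (mI (n := n) α)
  have hp : Measurable (fun φ : SS n => (θ, φ)) := measurable_prodMk_left
  have := h.comp hp
  exact this

lemma h1_neg {n : ℕ} (α : ℝ) (θ : SS n) : h1 α (-θ) = h1 α θ := by
  unfold h1
  have mIc : Measurable (fun φ : SS n => I3 α (-θ) φ (Set.Ioo 0 1) (Set.Ioo 0 1)) :=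
    mI2 α (-θ)
  have := neg_toSphere.lintegral_comp mIc
  rw [← this]
  apply lintegral_congr
  intro φ
  exact I3_neg _ _ _ _ _

lemma riesz_ball {n : ℕ} (hn : 2 ≤ n) (α : ℝ) :
    rieszEnergy α (ball (0 : EE n) 1) = ∫⁻ θ, h1 α θ ∂(sig n) := by
  have eball : ball (0 : EE n) 1 = {x | ‖x‖ < (fun _ => (1 : ℝ)) x} := by ext x; simp
  rw [eball, riesz_formula hn α _ measurable_const (fun _ _ _ => rfl)]
  rfl

lemma QQ_le {n : ℕ} {δ lam : ℝ} {g : EE n → ℝ} (H : Shape n δ lam g) {α : ℝ} (hα0 : 0 < α)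
    (hα : α < n) :
    ∫⁻ θ : SS n, (∫⁻ φ : SS n,
      I3 α θ φ (Set.Ioo 0 (rho g θ)) (Set.Ioo 0 (rho g θ)) ∂(sig n)) ∂(sig n) ≤
    ENNReal.ofReal (1 + δ ^ 2) * rieszEnergy α (ball (0 : EE n) 1) := by
  have hn := H.hn
  have hn0 := H.n0
  rw [riesz_ball hn]
  have hm := H.meas
  have e : ∀ θ : SS n, (∫⁻ φ : SS n,
      I3 α θ φ (Set.Ioo 0 (rho g θ)) (Set.Ioo 0 (rho g θ)) ∂(sig n)) =
      ENNReal.ofReal ((1 + g θ) ^ (1 + α / n)) * h1 α θ := by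
    intro θ
    have e1 : ∀ φ : SS n, I3 α θ φ (Set.Ioo 0 (rho g θ)) (Set.Ioo 0 (rho g θ)) =
        ENNReal.ofReal ((1 + g θ) ^ (1 + α / n)) * I3 α θ φ (Set.Ioo 0 1) (Set.Ioo 0 1) := by
      intro φ
      rw [I3_scale hn α _ _ (H.rho_pos _), H.rho_pow]
      congr 3
      field_simp
    rw [lintegral_congr e1, lintegral_const_mul' _ _ (by simp), h1]
  rw [lintegral_congr e]
  exact symm_le neg_toSphere (by fun_prop) (h1_meas α) (h1_neg α)
      (symm_bound H (by positivity) (by rw [div_le_one hn0]; exact hα.le))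

lemma riesz_le {n : ℕ} {δ lam : ℝ} {g : EE n → ℝ} (H : Shape n δ lam g) {α : ℝ} (hα0 : 0 < α)
    (hα : α < n) :
    2 * rieszEnergy α (shp g) + JJ α g ≤
      2 * (ENNReal.ofReal (1 + δ ^ 2) * rieszEnergy α (ball (0 : EE n) 1)) := by
  have hρ := H.rho_meas
  have hr1 : Measurable (fun p : SS n × SS n => rho g p.1) :=
    hρ.comp (measurable_subtype_coe.comp measurable_fst)
  have hr2 : Measurable (fun p : SS n × SS n => rho g p.2) :=
    hρ.comp (measurable_subtype_coe.comp measurable_snd)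
  have Vs : rieszEnergy α (shp g) = ∫⁻ θ : SS n, (∫⁻ φ : SS n,
      I3 α θ φ (Set.Ioo 0 (rho g θ)) (Set.Ioo 0 (rho g φ)) ∂(sig n)) ∂(sig n) :=
    riesz_formula H.hn α _ hρ H.rho_hom
  have main := abs_main (sig n)
    (fun θ φ : SS n => I3 α θ φ (Set.Ioo 0 (rho g θ)) (Set.Ioo 0 (rho g φ)))
    (fun θ φ : SS n => I3 α θ φ (Set.Ioo 0 (rho g θ)) (Set.Ioo 0 (rho g θ)))
    (fun θ φ : SS n => I3 α θ φ (Set.Ioo 0 (rho g φ)) (Set.Ioo 0 (rho g φ)))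
    (fun θ φ : SS n =>
      ENNReal.ofReal (cV n α * ((g θ - g φ) ^ 2 * ‖(θ : EE n) - φ‖ ^ (α - (n : ℝ)))))
    (I3_meas_Ioo α _ _ hr1 hr2) (I3_meas_Ioo α _ _ hr1 hr1) (I3_meas_Ioo α _ _ hr2 hr2)
    (fun θ φ => by
      rw [← I3_ident α θ φ (H.rho_pos θ) (H.rho_pos φ)]
      exact add_le_add le_rfl (D_lower H hα θ φ))
    (fun θ φ => (I3_swap2 _ _ _ _ _))
  rw [Vs, JJ]
  exact main.trans (mul_le_mul_right (QQ_le H hα0 hα) 2)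


lemma Shape.rho_cont {n : ℕ} {δ lam : ℝ} {g : EE n → ℝ} (H : Shape n δ lam g) (x : EE n)
    (hx : x ≠ 0) : ContinuousAt (rho g) x := by
  unfold rho
  have h : ContinuousAt (fun y => 1 + g y) x := continuousAt_const.add (H.cont x hx)
  exact h.rpow_const (Or.inl (by linarith [H.onepos x]))

lemma frontier_shp {n : ℕ} {δ lam : ℝ} {g : EE n → ℝ} (H : Shape n δ lam g) :
    frontier (shp g) ⊆ (fun x => rho g x • x) '' sphere (0 : EE n) 1 := by
  intro x hx
  have hx0 : x ≠ 0 := by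
    rintro rfl
    apply hx.2
    rw [mem_interior_iff_mem_nhds]
    filter_upwards [ball_mem_nhds (0 : EE n) (by norm_num : (0 : ℝ) < 1 / 2)] with y hy
    rw [mem_ball_zero_iff] at hy
    exact hy.trans_le (H.rho_ge y)
  have hc := H.rho_cont x hx0
  have hcn : ContinuousAt (fun y : EE n => ‖y‖) x := continuous_norm.continuousAt
  have h1 : ¬ ‖x‖ < rho g x := by
    intro h
    apply hx.2
    rw [mem_interior_iff_mem_nhds]
    exact hcn.eventually_lt hc h
  have h2 : ¬ rho g x < ‖x‖ := by
    intro h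
    have := hc.eventually_lt hcn h
    rw [frontier_eq_closure_inter_closure] at hx
    obtain ⟨y, hy1, hy2⟩ := mem_closure_iff_nhds.1 hx.1 _ this
    exact lt_asymm (show rho g y < ‖y‖ from hy1) (show ‖y‖ < rho g y from hy2)
  have h3 : ‖x‖ = rho g x := le_antisymm (not_lt.1 h2) (not_lt.1 h1)
  have hn : 0 < ‖x‖ := norm_pos_iff.2 hx0
  refine ⟨‖x‖⁻¹ • x, ?_, ?_⟩
  · rw [mem_sphere_zero_iff_norm, norm_smul, norm_inv, norm_norm, inv_mul_cancel₀ hn.ne']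
  · dsimp only
    rw [H.rho_hom _ (inv_pos.2 hn), ← h3, smul_smul, mul_inv_cancel₀ hn.ne', one_smul]

lemma vol_ball_pos {n : ℕ} (x : EE n) {r : ℝ} (hr : 0 < r) : 0 < (volume (ball x r)).toReal :=
  ENNReal.toReal_pos (measure_ball_pos _ _ hr).ne' measure_ball_lt_top.ne

lemma essBoundary_sub {n : ℕ} (E : Set (EE n)) : essBoundary E ⊆ frontier E := by
  intro x hx
  by_contra h
  have : x ∈ interior E ∨ x ∈ interior Eᶜ := by
    rw [frontier_eq_closure_inter_closure] at h
    by_contra! h2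
    apply h
    rw [interior_compl] at h2
    refine ⟨not_not.1 h2.2, ?_⟩
    rw [closure_compl]; exact h2.1
  rcases this with h1 | h1
  · apply hx.2
    obtain ⟨ε, hε, hb⟩ := Metric.isOpen_iff.1 isOpen_interior x h1
    refine tendsto_const_nhds.congr' ?_
    filter_upwards [Ioo_mem_nhdsGT hε] with r hr
    have : E ∩ ball x r = ball x r := by
      rw [Set.inter_eq_right]
      exact (ball_subset_ball hr.2.le).trans (hb.trans interior_subset)
    rw [this, div_self (vol_ball_pos x hr.1).ne']
  · apply hx.1
    obtain ⟨ε, hε, hb⟩ := Metric.isOpen_iff.1 isOpen_interior x h1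
    refine tendsto_const_nhds.congr' ?_
    filter_upwards [Ioo_mem_nhdsGT hε] with r hr
    have : E ∩ ball x r = ∅ := by
      rw [← Set.disjoint_iff_inter_eq_empty, disjoint_comm]
      rw [← Set.subset_compl_iff_disjoint_right]
      exact (ball_subset_ball hr.2.le).trans (hb.trans interior_subset)
    simp [this]

lemma half_ball {n : ℕ} (x y : EE n) {r : ℝ} (hr : 0 < r) :
    (volume (ball y (r / 2))).toReal = (1 / 2) ^ n * (volume (ball x r)).toReal := by
  rw [Measure.addHaar_ball_of_pos _ y (half_pos hr), Measure.addHaar_ball_of_pos _ x hr]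
  rw [ENNReal.toReal_mul, ENNReal.toReal_mul, ENNReal.toReal_ofReal (by positivity),
    ENNReal.toReal_ofReal (by positivity)]
  simp only [finrank_euclideanSpace, Fintype.card_fin, div_pow]
  ring

lemma sphere_sub_ess {n : ℕ} {R : ℝ} (hR : 0 < R) :
    sphere (0 : EE n) R ⊆ essBoundary (ball (0 : EE n) R) := by
  intro x hx
  rw [mem_sphere_zero_iff_norm] at hx
  have hq : (0 : ℝ) < (1 / 2) ^ n := by positivity
  have fin : ∀ (y : EE n) (r : ℝ), volume (ball y r) ≠ ⊤ := fun y r => measure_ball_lt_top.ne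
  have key : ∀ r ∈ Set.Ioo 0 R,
      (1 / 2) ^ n ≤ (volume (ball 0 R ∩ ball x r)).toReal / (volume (ball x r)).toReal ∧
      (volume (ball 0 R ∩ ball x r)).toReal / (volume (ball x r)).toReal ≤ 1 - (1 / 2) ^ n := by
    intro r hr
    have hv := vol_ball_pos x hr.1
    have hnorm : ‖(r / 2 / R) • x‖ = r / 2 := by
      rw [norm_smul, hx, Real.norm_of_nonneg (by have := hr.1; positivity)]; field_simp
    constructor
    · rw [le_div_iff₀ hv, ← half_ball x (x - (r / 2 / R) • x) hr.1]
      apply ENNReal.toReal_mono (measure_ne_top_of_subset Set.inter_subset_left (fin _ _))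
      apply measure_mono
      intro z hz
      rw [mem_ball, dist_eq_norm] at hz
      constructor
      · rw [mem_ball_zero_iff]
        have h1 : ‖x - (r / 2 / R) • x‖ = R - r / 2 := by
          have : x - (r / 2 / R) • x = (1 - r / 2 / R) • x := by rw [sub_smul, one_smul]
          have h9 : r / 2 / R ≤ 1 := by rw [div_le_one hR]; linarith [hr.1, hr.2]
          rw [this, norm_smul, hx, Real.norm_of_nonneg (by linarith)]; field_simp
        calc ‖z‖ = ‖(z - (x - (r / 2 / R) • x)) + (x - (r / 2 / R) • x)‖ := by congr 1; abel
          _ ≤ _ := norm_add_le _ _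
          _ < R := by linarith
      · rw [mem_ball, dist_eq_norm]
        calc ‖z - x‖ = ‖(z - (x - (r / 2 / R) • x)) - (r / 2 / R) • x‖ := by congr 1; abel
          _ ≤ _ := norm_sub_le _ _
          _ < r := by linarith
    · rw [div_le_iff₀ hv, sub_mul, one_mul, ← half_ball x (x + (r / 2 / R) • x) hr.1]
      have hd : Disjoint (ball 0 R ∩ ball x r) (ball (x + (r / 2 / R) • x) (r / 2)) := by
        rw [Set.disjoint_left]
        intro z hz1 hz
        rw [mem_ball, dist_eq_norm] at hz
        have hz2 := hz1.1
        rw [mem_ball_zero_iff] at hz2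
        have h1 : ‖x + (r / 2 / R) • x‖ = R + r / 2 := by
          have : x + (r / 2 / R) • x = (1 + r / 2 / R) • x := by rw [add_smul, one_smul]
          rw [this, norm_smul, hx, Real.norm_of_nonneg (by have := hr.1; positivity)]; field_simp
        have : ‖x + (r / 2 / R) • x‖ ≤ ‖z‖ + ‖z - (x + (r / 2 / R) • x)‖ := by
          calc _ = ‖z - (z - (x + (r / 2 / R) • x))‖ := by congr 1; abel
            _ ≤ _ := norm_sub_le _ _
        linarith
      have hs : (ball 0 R ∩ ball x r) ∪ (ball (x + (r / 2 / R) • x) (r / 2)) ⊆ ball x r := by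
        apply Set.union_subset Set.inter_subset_right
        intro z hz
        rw [mem_ball, dist_eq_norm] at hz ⊢
        calc ‖z - x‖ = ‖(z - (x + (r / 2 / R) • x)) + (r / 2 / R) • x‖ := by congr 1; abel
          _ ≤ _ := norm_add_le _ _
          _ < r := by linarith
      have := measure_mono (μ := volume) hs
      rw [measure_union hd measurableSet_ball] at this
      have h3 := ENNReal.toReal_mono (fin _ _) this
      rw [ENNReal.toReal_add (measure_ne_top_of_subset Set.inter_subset_left (fin _ _)) (fin _ _)]
        at h3
      linarith
  constructor
  · intro h
    have := ge_of_tendsto h (by filter_upwards [Ioo_mem_nhdsGT hR] with r hr using (key r hr).1)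
    linarith
  · intro h
    have := le_of_tendsto h (by filter_upwards [Ioo_mem_nhdsGT hR] with r hr using (key r hr).2)
    linarith


lemma pow_add_bound {a t : ℝ} (ha : 0 ≤ a) (ht : 0 ≤ t) (h3 : a + t ≤ 3) (N : ℕ) :
    (a + t) ^ N ≤ a ^ N + N * 3 ^ N * t := by
  have h := abs_pow_sub_pow_le (a + t) a N
  have h1 : max |a + t| |a| = a + t := by
    rw [abs_of_nonneg ha, abs_of_nonneg (by linarith)]; exact max_eq_left (by linarith)
  rw [h1, show a + t - a = t by ring, abs_of_nonneg ht] at h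
  have h2 : (a + t) ^ (N - 1) ≤ 3 ^ N := by
    calc (a + t) ^ (N - 1) ≤ 3 ^ (N - 1) := pow_le_pow_left₀ (by linarith) h3 _
      _ ≤ 3 ^ N := pow_le_pow_right₀ (by norm_num) (by omega)
  have h4 : t * N * (a + t) ^ (N - 1) ≤ t * N * 3 ^ N := by gcongr
  have := le_abs_self ((a + t) ^ N - a ^ N)
  linarith

lemma image_le {n : ℕ} {δ lam : ℝ} {g : EE n → ℝ} (H : Shape n δ lam g) :
    μH[(n : ℝ) - 1] ((fun x => rho g x • x) '' sphere (0 : EE n) 1) ≤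
      ∫⁻ x in sphere (0 : EE n) 1,
        ENNReal.ofReal (rho g x ^ (n - 1) + n * 3 ^ n * (δ ^ 2 + lam ^ 2)) ∂μH[(n : ℝ) - 1] := by
  have hn := H.hn
  have hdim : (n : ℝ) - 1 = ((n - 1 : ℕ) : ℝ) := by
    rw [Nat.cast_sub (by omega)]; simp
  set η := δ ^ 2 with hη
  have hδ := H.δ0
  have hη0 : 0 < η := by positivity
  have hη1 : η ≤ 1 / 4 := by have := H.δ1; nlinarith
  set S : ℕ → Set (EE n) := fun j => sphere (0 : EE n) 1 ∩ {x | ⌊rho g x / η⌋₊ = j} with hS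
  have hSm : ∀ j, MeasurableSet (S j) := by
    intro j
    apply isClosed_sphere.measurableSet.inter
    have : Measurable (fun x => ⌊rho g x / η⌋₊) := (H.rho_meas.div_const η).nat_floor
    exact this (measurableSet_singleton j)
  have hSu : sphere (0 : EE n) 1 = ⋃ j, S j := by
    ext x; simp [hS]
  have hSd : Pairwise (fun i j => Disjoint (S i) (S j)) := by
    intro i j hij
    rw [Set.disjoint_left]
    intro x hx hy
    exact hij (hx.2.symm.trans hy.2)
  nth_rewrite 1 [hSu]
  rw [Set.image_iUnion]
  refine (measure_iUnion_le _).trans ?_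
  rw [hSu, lintegral_iUnion hSm hSd]
  apply ENNReal.tsum_le_tsum
  intro j
  have hup : ∀ x ∈ S j, rho g x ≤ (j + 1) * η ∧ (j + 1) * η ≤ rho g x + η := by
    intro x hx
    have hp := (H.rho_pos x).le
    have h2 : ⌊rho g x / η⌋₊ = j := hx.2
    constructor
    · have := Nat.lt_floor_add_one (rho g x / η)
      rw [h2, div_lt_iff₀ hη0] at this
      exact this.le
    · have := Nat.floor_le (div_nonneg hp hη0.le)
      rw [h2, le_div_iff₀ hη0] at this
      linarith
  have hM : 0 ≤ ((j : ℝ) + 1) * η + lam ^ 2 := by positivity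
  have hlip : LipschitzOnWith (Real.toNNReal (((j : ℝ) + 1) * η + lam ^ 2)) (fun x => rho g x • x) (S j) := by
    apply LipschitzOnWith.of_dist_le_mul
    intro x hx y hy
    rw [dist_eq_norm, dist_eq_norm]
    rw [Real.coe_toNNReal _ hM]
    set M := ((j : ℝ) + 1) * η with hMdef
    have h1 := (hup x hx).1
    have h2 := (hup y hy).1
    have hM2 : 1 / 2 ≤ M := (H.rho_ge x).trans h1
    have h3 := H.rho_diff_le x y
    have h4 := H.lip x hx.1 y hy.1
    have h5 : (rho g x - rho g y) ^ 2 ≤ (lam * ‖x - y‖) ^ 2 := by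
      rw [← sq_abs]; exact pow_le_pow_left₀ (abs_nonneg _) (h3.trans h4) 2
    have h6 := norm_sq_aux ⟨x, hx.1⟩ ⟨y, hy.1⟩ (rho g x) (rho g y)
    simp only at h6
    have h7 : rho g x * rho g y ≤ M ^ 2 := by
      nlinarith [H.rho_pos x, H.rho_pos y]
    rw [← sq_le_sq₀ (norm_nonneg _) (by positivity), h6, mul_pow]
    have h8 : lam ^ 2 + M ^ 2 ≤ (M + lam ^ 2) ^ 2 := by nlinarith [sq_nonneg lam, sq_nonneg (lam ^ 2)]
    nlinarith [sq_nonneg ‖x - y‖]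
  refine (hlip.hausdorffMeasure_image_le (by rw [hdim]; positivity)).trans ?_
  rw [← setLIntegral_const]
  apply setLIntegral_mono' (hSm j)
  intro x hx
  rw [hdim, ENNReal.rpow_natCast]
  change ENNReal.ofReal (((j : ℝ) + 1) * η + lam ^ 2) ^ (n - 1) ≤ _
  rw [← ENNReal.ofReal_pow hM]
  apply ENNReal.ofReal_le_ofReal
  have hl : lam ^ 2 ≤ 1 := by have := H.lam1; have := H.lam0; nlinarith
  have h1 : ((j : ℝ) + 1) * η + lam ^ 2 ≤ rho g x + (η + lam ^ 2) := by linarith [(hup x hx).2]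
  have hr := H.rho_pos x
  have hr' := H.rho_le x
  have h2 := pow_add_bound hr.le (by positivity : 0 ≤ η + lam ^ 2) (by linarith) (n - 1)
  have h3 : ((n - 1 : ℕ) : ℝ) * 3 ^ (n - 1) * (η + lam ^ 2) ≤ n * 3 ^ n * (η + lam ^ 2) := by
    gcongr
    · omega
    · norm_num
    · omega
  calc _ ≤ (rho g x + (η + lam ^ 2)) ^ (n - 1) := pow_le_pow_left₀ hM h1 _
    _ ≤ _ := by linarith

lemma neg_hausdorff {n : ℕ} (d : ℝ) : MeasurePreserving (fun x : EE n => -x)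
    (μH[d].restrict (sphere (0 : EE n) 1)) (μH[d].restrict (sphere (0 : EE n) 1)) := by
  have h := (IsometryEquiv.neg (EE n)).measurePreserving_hausdorffMeasure d
  have h2 := h.restrict_preimage (isClosed_sphere (x := (0 : EE n)) (ε := 1)).measurableSet
  have e : (IsometryEquiv.neg (EE n)) ⁻¹' sphere (0 : EE n) 1 = sphere (0 : EE n) 1 := by
    ext x
    simp
  rw [e] at h2
  exact h2

lemma per_unit {n : ℕ} {δ lam : ℝ} {g : EE n → ℝ} (H : Shape n δ lam g) :
    μH[(n : ℝ) - 1] (frontier (shp g)) ≤ ENNReal.ofReal (1 + n * 3 ^ n * (δ ^ 2 + lam ^ 2)) *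
      μH[(n : ℝ) - 1] (sphere (0 : EE n) 1) := by
  refine (measure_mono (frontier_shp H)).trans ((image_le H).trans ?_)
  have hn := H.hn
  have hn0 := H.n0
  have hdim : (n : ℝ) - 1 = ((n - 1 : ℕ) : ℝ) := by
    rw [Nat.cast_sub (by omega)]; simp
  set C := (n : ℝ) * 3 ^ n * (δ ^ 2 + lam ^ 2) with hC
  have hC0 : 0 ≤ C := by positivity
  have e : ∀ x, ENNReal.ofReal (rho g x ^ (n - 1) + C) =
      ENNReal.ofReal ((1 + g x) ^ (((n : ℝ) - 1) / n) + C) * 1 := by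
    intro x
    rw [mul_one, ← Real.rpow_natCast, H.rho_pow, hdim]
  have hm := H.meas
  rw [lintegral_congr e]
  have := symm_le (neg_hausdorff (n := n) ((n : ℝ) - 1))
    (f := fun x => ENNReal.ofReal ((1 + g x) ^ (((n : ℝ) - 1) / n) + C)) (w := fun _ => 1)
    (by fun_prop) measurable_const (fun _ => rfl) (K := ENNReal.ofReal (1 + C)) (by
      intro x
      have h1 := H.onepos x
      have h2 := H.onele x
      rw [H.odd, ← sub_eq_add_neg, two_ofReal, ← ENNReal.ofReal_add (by positivity)
        (by have : 0 ≤ 1 - g x := by linarith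
            positivity)]
      apply ENNReal.ofReal_le_ofReal
      have h2' : (1 : ℝ) ≤ n := by exact_mod_cast (by omega : 1 ≤ n)
      have := bern0 (q := ((n : ℝ) - 1) / n) (div_nonneg (by linarith) hn0.le)
        (by rw [div_le_one hn0]; linarith) (H.half x)
      linarith)
  simpa using this


def faceMap {k : ℕ} (i : Fin (k + 1)) (s : ℝ) (v : Fin k → ℝ) : EE (k + 1) :=
  WithLp.toLp 2 (i.insertNth s v)

lemma faceMap_same {k : ℕ} (i : Fin (k + 1)) (s : ℝ) (v : Fin k → ℝ) : faceMap i s v i = s := by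
  simp [faceMap]

lemma faceMap_contDiff {k : ℕ} (i : Fin (k + 1)) (s : ℝ) : ContDiff ℝ 1 (faceMap i s) := by
  rw [contDiff_euclidean]
  intro j
  rcases Fin.eq_self_or_eq_succAbove i j with rfl | ⟨l, rfl⟩
  · simp only [faceMap_same]; exact contDiff_const
  · simp only [faceMap, Fin.insertNth_apply_succAbove]
    exact contDiff_apply ℝ ℝ l

lemma faceMap_ne {k : ℕ} (i : Fin (k + 1)) {s : ℝ} (hs : s ≠ 0) (v : Fin k → ℝ) :
    faceMap i s v ≠ 0 := by
  intro h
  have := faceMap_same i s v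
  rw [h] at this
  exact hs this.symm

def nface {k : ℕ} (i : Fin (k + 1)) (s : ℝ) (v : Fin k → ℝ) : EE (k + 1) :=
  ‖faceMap i s v‖⁻¹ • faceMap i s v

lemma nface_fin {k : ℕ} (i : Fin (k + 1)) {s : ℝ} (hs : s ≠ 0) :
    μH[(k : ℝ)] (nface i s '' Set.Icc (fun _ => -1) (fun _ => 1)) < ⊤ := by
  have h1 : ContDiff ℝ 1 (nface i s) := by
    unfold nface
    have h := faceMap_contDiff i s
    exact ((h.norm ℝ (faceMap_ne i hs)).inv
      (fun x => norm_ne_zero_iff.2 (faceMap_ne i hs x))).smul h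
  obtain ⟨K, hK⟩ := LocallyLipschitzOn.exists_lipschitzOnWith_of_compact
    (isCompact_Icc (a := (fun _ : Fin k => (-1 : ℝ))) (b := fun _ => 1))
    (h1.locallyLipschitz.locallyLipschitzOn)
  refine (hK.hausdorffMeasure_image_le (d := (k : ℝ)) (by positivity)).trans_lt ?_
  have h2 : (μH[(k : ℝ)] : Measure (Fin k → ℝ)) = volume := by
    have := hausdorffMeasure_pi_real (ι := Fin k)
    rwa [Fintype.card_fin] at this
  rw [h2]
  exact ENNReal.mul_lt_top (ENNReal.rpow_lt_top_of_nonneg (by positivity) (by simp))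
    isCompact_Icc.measure_lt_top

lemma sphere_cover {k : ℕ} : sphere (0 : EE (k + 1)) 1 ⊆
    ⋃ i : Fin (k + 1), (nface i 1 '' Set.Icc (fun _ => -1) (fun _ => 1) ∪
      nface i (-1) '' Set.Icc (fun _ => -1) (fun _ => 1)) := by
  intro x hx
  rw [mem_sphere_zero_iff_norm] at hx
  obtain ⟨i, hi⟩ := Finite.exists_max (fun i => |x i|)
  have hi0 : 0 < |x i| := by
    by_contra h
    have : x = 0 := by
      ext j
      have := hi j
      have h3 : |x j| ≤ 0 := this.trans (not_lt.1 h)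
      simpa using abs_nonpos_iff.1 h3
    rw [this] at hx; simp at hx
  rw [Set.mem_iUnion]
  refine ⟨i, ?_⟩
  have key : ∀ s : ℝ, x i = s * |x i| →
      x ∈ nface i s '' Set.Icc (fun _ => -1) (fun _ => 1) := by
    intro s hs
    refine ⟨fun l => |x i|⁻¹ * x (i.succAbove l), ?_, ?_⟩
    · constructor
      · intro l
        have := (abs_le.1 (hi (i.succAbove l))).1
        dsimp only
        rw [inv_mul_eq_div, le_div_iff₀ hi0]; linarith
      · intro l
        have := (abs_le.1 (hi (i.succAbove l))).2
        dsimp only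
        rw [inv_mul_eq_div, div_le_iff₀ hi0]; linarith
    · have e : faceMap i s (fun l => |x i|⁻¹ * x (i.succAbove l)) = |x i|⁻¹ • x := by
        ext j
        rcases Fin.eq_self_or_eq_succAbove i j with rfl | ⟨l, rfl⟩
        · rw [faceMap_same, PiLp.smul_apply, smul_eq_mul]
          field_simp
          exact hs.symm
        · simp [faceMap]
      rw [nface, e, norm_smul, hx, norm_inv, Real.norm_eq_abs, abs_abs, mul_one, inv_inv, smul_smul,
        mul_inv_cancel₀ hi0.ne', one_smul]
  rcases le_total 0 (x i) with h | h
  · left; apply key; rw [abs_of_nonneg h, one_mul]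
  · right; apply key; rw [abs_of_nonpos h]; ring

lemma sphere_fin {n : ℕ} (hn : 2 ≤ n) : μH[(n : ℝ) - 1] (sphere (0 : EE n) 1) < ⊤ := by
  obtain ⟨k, rfl⟩ : ∃ k, n = k + 1 := ⟨n - 1, by omega⟩
  rw [Nat.cast_add, Nat.cast_one, add_sub_cancel_right]
  refine (measure_mono sphere_cover).trans_lt ?_
  refine (measure_iUnion_le _).trans_lt ?_
  rw [tsum_fintype]
  apply ENNReal.sum_lt_top.2
  intro i _
  exact (measure_union_le _ _).trans_lt
    (ENNReal.add_lt_top.2 ⟨nface_fin i (by norm_num), nface_fin i (by norm_num)⟩)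

lemma smul_haus {n : ℕ} (hn : 2 ≤ n) {R : ℝ} (hR : 0 < R) (s : Set (EE n)) :
    μH[(n : ℝ) - 1] (R • s) = ENNReal.ofReal (R ^ ((n : ℝ) - 1)) * μH[(n : ℝ) - 1] s := by
  have h1 : (0 : ℝ) ≤ (n : ℝ) - 1 := by
    have : (2 : ℝ) ≤ n := by exact_mod_cast hn
    linarith
  rw [Measure.hausdorffMeasure_smul₀ h1 hR.ne', ENNReal.smul_def, smul_eq_mul]
  congr 1
  rw [ENNReal.ofReal]
  congr 1
  rw [Real.toNNReal_rpow_of_nonneg hR.le]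
  congr 1
  ext
  simp [Real.coe_toNNReal _ hR.le, abs_of_pos hR]

lemma per_shp {n : ℕ} {δ lam : ℝ} {g : EE n → ℝ} (H : Shape n δ lam g) {R : ℝ} (hR : 0 < R) :
    perimeter (R • shp g) ≤ ENNReal.ofReal (R ^ ((n : ℝ) - 1)) *
      (ENNReal.ofReal (1 + n * 3 ^ n * (δ ^ 2 + lam ^ 2)) *
      μH[(n : ℝ) - 1] (sphere (0 : EE n) 1)) := by
  have e : frontier (R • shp g) = R • frontier (shp g) :=
    ((Homeomorph.smulOfNeZero R hR.ne').image_frontier (shp g)).symm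
  calc perimeter (R • shp g) ≤ μH[(n : ℝ) - 1] (R • frontier (shp g)) := by
        rw [← e]; exact measure_mono (essBoundary_sub _)
    _ = _ := smul_haus H.hn hR _
    _ ≤ _ := by gcongr; exact per_unit H

lemma per_ball {n : ℕ} (hn : 2 ≤ n) {R : ℝ} (hR : 0 < R) :
    ENNReal.ofReal (R ^ ((n : ℝ) - 1)) * μH[(n : ℝ) - 1] (sphere (0 : EE n) 1) ≤
      perimeter (ball (0 : EE n) R) := by
  rw [← smul_haus hn hR]
  apply measure_mono
  have : R • sphere (0 : EE n) 1 = sphere (0 : EE n) R := by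
    rw [smul_sphere' hR.ne', smul_zero, mul_one, Real.norm_of_nonneg hR.le]
  rw [this]
  exact sphere_sub_ess hR


lemma vol_smul {n : ℕ} {R : ℝ} (hR : 0 < R) (F : Set (EE n)) :
    volume (R • F) = ENNReal.ofReal (R ^ n) * volume F := by
  rw [Measure.addHaar_smul_of_nonneg _ hR.le]
  simp

lemma pot_smul {n : ℕ} {R : ℝ} (hR : 0 < R) (β A : ℝ) (F : Set (EE n)) :
    potEnergy β A (R • F) = ENNReal.ofReal (R ^ ((n : ℝ) + β)) * potEnergy β A F := by
  unfold potEnergy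
  rw [scale_lintegral volume hR]
  have e : ∀ x : EE n, ENNReal.ofReal (A * ‖R • x‖ ^ β) =
      ENNReal.ofReal (R ^ β) * ENNReal.ofReal (A * ‖x‖ ^ β) := by
    intro x
    rw [norm_smul, Real.norm_of_nonneg hR.le, Real.mul_rpow hR.le (norm_nonneg _),
      ← ENNReal.ofReal_mul (by positivity)]
    congr 1; ring
  simp only [e]
  rw [lintegral_const_mul' _ _ (by simp), ← mul_assoc, ← ENNReal.ofReal_mul (by positivity)]
  congr 2
  rw [Real.rpow_add hR, Real.rpow_natCast]; simp

lemma riesz_smul {n : ℕ} {R : ℝ} (hR : 0 < R) (α : ℝ) (F : Set (EE n)) :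
    rieszEnergy α (R • F) = ENNReal.ofReal (R ^ ((n : ℝ) + α)) * rieszEnergy α F := by
  unfold rieszEnergy
  rw [scale_lintegral volume hR]
  have e : ∀ x : EE n, ∫⁻ y in R • F, ENNReal.ofReal (‖R • x - y‖ ^ (α - (n : ℝ))) =
      ENNReal.ofReal (R ^ α) * ∫⁻ y in F, ENNReal.ofReal (‖x - y‖ ^ (α - (n : ℝ))) := by
    intro x
    rw [scale_lintegral volume hR]
    have e2 : ∀ y : EE n, ENNReal.ofReal (‖R • x - R • y‖ ^ (α - (n : ℝ))) =
      ENNReal.ofReal (R ^ (α - (n : ℝ))) * ENNReal.ofReal (‖x - y‖ ^ (α - (n : ℝ))) := by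
      intro y
      rw [← smul_sub, norm_smul, Real.norm_of_nonneg hR.le, Real.mul_rpow hR.le (norm_nonneg _),
        ← ENNReal.ofReal_mul (by positivity)]
    simp only [e2]
    rw [lintegral_const_mul' _ _ (by simp), ← mul_assoc, ← ENNReal.ofReal_mul (by positivity)]
    congr 2
    simp only [finrank_euclideanSpace, Fintype.card_fin]
    rw [← Real.rpow_natCast, ← Real.rpow_add hR]; congr 1; ring
  simp only [e]
  rw [lintegral_const_mul' _ _ (by simp), ← mul_assoc, ← ENNReal.ofReal_mul (by positivity)]
  congr 2
  rw [Real.rpow_add hR, Real.rpow_natCast]; simp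

lemma pot_fin {n : ℕ} {β A : ℝ} (hβ : 0 < β) (hA : 0 < A) :
    potEnergy β A (ball (0 : EE n) 1) < ⊤ := by
  unfold potEnergy
  calc _ ≤ ∫⁻ x in ball (0 : EE n) 1, ENNReal.ofReal A := by
        apply setLIntegral_mono' measurableSet_ball
        intro x hx
        apply ENNReal.ofReal_le_ofReal
        rw [mem_ball_zero_iff] at hx
        have := Real.rpow_le_one (norm_nonneg x) hx.le hβ.le
        nlinarith
    _ = ENNReal.ofReal A * volume (ball (0 : EE n) 1) := setLIntegral_const _ _
    _ < ⊤ := ENNReal.mul_lt_top (by simp) measure_ball_lt_top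

lemma riesz_fin {n : ℕ} (hn : 2 ≤ n) {α : ℝ} (hα : 0 < α) :
    rieszEnergy α (ball (0 : EE n) 1) < ⊤ := by
  have : Nontrivial (EE n) := by
    have : Nonempty (Fin n) := ⟨⟨0, by omega⟩⟩
    infer_instance
  set F : EE n → ℝ≥0∞ := fun z => ENNReal.ofReal (‖z‖ ^ (α - (n : ℝ))) with hF
  have hI : IntegrableOn (fun z : EE n => ‖z‖ ^ (α - (n : ℝ))) (ball 0 2) volume := by
    rw [integrableOn_fun_norm_addHaar volume (f := fun t : ℝ => t ^ (α - (n : ℝ)))]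
    have h1 : IntegrableOn (fun y : ℝ => y ^ (α - 1)) (Set.Ioo 0 2) volume :=
      (intervalIntegral.integrableOn_Ioo_rpow_iff (by norm_num)).2 (by linarith)
    refine h1.congr_fun ?_ measurableSet_Ioo
    intro y hy
    have hy0 : 0 < y := hy.1
    simp only [finrank_euclideanSpace, Fintype.card_fin, smul_eq_mul]
    rw [← Real.rpow_natCast, ← Real.rpow_add hy0, Nat.cast_sub (by omega)]
    congr 1; push_cast; ring
  have hfin : ∫⁻ z in ball (0 : EE n) 2, F z < ⊤ := by
    have := hI.2
    rw [hasFiniteIntegral_iff_ofReal (Eventually.of_forall fun z => by positivity)] at this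
    exact this
  unfold rieszEnergy
  calc _ ≤ ∫⁻ x in ball (0 : EE n) 1, ∫⁻ z in ball (0 : EE n) 2, F z := by
        apply setLIntegral_mono' measurableSet_ball
        intro x hx
        calc ∫⁻ y in ball (0 : EE n) 1, ENNReal.ofReal (‖x - y‖ ^ (α - (n : ℝ)))
            = ∫⁻ y, (ball (0 : EE n) 1).indicator (fun y => F (x - y)) y := by
              rw [lintegral_indicator measurableSet_ball]
          _ ≤ ∫⁻ y, (ball (0 : EE n) 2).indicator F (x - y) := by
              apply lintegral_mono
              intro y
              dsimp only
              by_cases hy : y ∈ ball (0 : EE n) 1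
              · rw [Set.indicator_of_mem hy, Set.indicator_of_mem]
                rw [mem_ball_zero_iff] at *
                linarith [norm_sub_le x y]
              · rw [Set.indicator_of_notMem hy]; exact zero_le
          _ = ∫⁻ z, (ball (0 : EE n) 2).indicator F z :=
              lintegral_sub_left_eq_self (fun z => (ball (0 : EE n) 2).indicator F z) x
          _ = _ := by rw [lintegral_indicator measurableSet_ball]
    _ = (∫⁻ z in ball (0 : EE n) 2, F z) * volume (ball (0 : EE n) 1) := setLIntegral_const _ _
    _ < ⊤ := ENNReal.mul_lt_top hfin measure_ball_lt_top

lemma symm_small {n : ℕ} {δ lam : ℝ} {g : EE n → ℝ} (H : Shape n δ lam g) :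
    volume (symmDiff (ball (0 : EE n) 1) (shp g)) ≤
      ENNReal.ofReal (2 * δ) * volume (ball (0 : EE n) 1) := by
  have hn0 := H.n0
  have hδ := H.δ0
  have hδ1 := H.δ1
  have hn1 : n ≠ 0 := by have := H.hn; omega
  set b : ℝ := (1 + δ) ^ (1 / (n : ℝ)) with hb
  set a : ℝ := (1 - δ) ^ (1 / (n : ℝ)) with ha
  have ha0 : 0 < a := Real.rpow_pos_of_pos (by linarith) _
  have hb0 : 0 < b := Real.rpow_pos_of_pos (by linarith) _
  have han : a ^ n = 1 - δ := by
    rw [ha, ← Real.rpow_natCast, ← Real.rpow_mul (by linarith), one_div,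
      inv_mul_cancel₀ hn0.ne', Real.rpow_one]
  have hbn : b ^ n = 1 + δ := by
    rw [hb, ← Real.rpow_natCast, ← Real.rpow_mul (by linarith), one_div,
      inv_mul_cancel₀ hn0.ne', Real.rpow_one]
  have ha1 : a ≤ 1 := Real.rpow_le_one (by linarith) (by linarith) (by positivity)
  have hb1 : 1 ≤ b := Real.one_le_rpow (by linarith) (by positivity)
  have hρ : ∀ x, a ≤ rho g x ∧ rho g x ≤ b := by
    intro x
    have := abs_le.1 (H.bd x)
    constructor
    · exact Real.rpow_le_rpow (by linarith) (by linarith) (by positivity)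
    · exact Real.rpow_le_rpow (by linarith) (by linarith) (by positivity)
  have hsub : symmDiff (ball (0 : EE n) 1) (shp g) ⊆ ball 0 b \ ball 0 a := by
    intro x hx
    obtain ⟨h1, h2⟩ := hρ x
    rw [Set.mem_symmDiff] at hx
    simp only [Set.mem_sdiff, mem_ball_zero_iff, shp, Set.mem_ofPred_eq, not_lt] at hx ⊢
    rcases hx with ⟨h3, h4⟩ | ⟨h3, h4⟩
    · exact ⟨by linarith, by linarith⟩
    · exact ⟨by linarith, by linarith⟩
  refine (measure_mono hsub).trans ?_
  rw [measure_sdiff (ball_subset_ball (by linarith)) measurableSet_ball.nullMeasurableSet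
    measure_ball_lt_top.ne, Measure.addHaar_ball_of_pos _ _ hb0, Measure.addHaar_ball_of_pos _ _ ha0]
  simp only [finrank_euclideanSpace, Fintype.card_fin]
  rw [hbn, han, ← ENNReal.sub_mul (by intros; exact measure_ball_lt_top.ne),
    ← ENNReal.ofReal_sub _ (by linarith)]
  apply le_of_eq
  congr 2; ring

lemma symm_small_R {n : ℕ} {δ lam : ℝ} {g : EE n → ℝ} (H : Shape n δ lam g) {R : ℝ} (hR : 0 < R) :
    volume (symmDiff (ball (0 : EE n) R) (R • shp g)) ≤
      ENNReal.ofReal (R ^ n) * (ENNReal.ofReal (2 * δ) * volume (ball (0 : EE n) 1)) := by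
  rw [← smul_unitBall_of_pos hR, ← Set.smul_set_symmDiff₀ hR.ne', vol_smul hR]
  gcongr
  exact symm_small H


def gg {n : ℕ} (e : EE n) (δ k : ℝ) (x : EE n) : ℝ :=
  δ * Real.sin (k * (inner ℝ e x / ‖x‖))

lemma gg_sphere {n : ℕ} (e : EE n) (δ k : ℝ) {x : EE n} (hx : ‖x‖ = 1) :
    gg e δ k x = δ * Real.sin (k * inner ℝ e x) := by
  rw [gg, hx, div_one]

lemma sin_lip (a b : ℝ) : |Real.sin a - Real.sin b| ≤ |a - b| := by
  have := Real.lipschitzWith_sin.dist_le_mul a b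
  simpa [Real.dist_eq] using this

lemma gg_shape {n : ℕ} (hn : 2 ≤ n) {e : EE n} (he : ‖e‖ = 1) {δ k : ℝ} (hδ : 0 < δ)
    (hδ1 : δ ≤ 1 / 2) (hk : 0 ≤ k) (hl : δ * k ≤ 1) : Shape n δ (δ * k) (gg e δ k) where
  hn := hn
  meas := by unfold gg; fun_prop
  cont := by
    intro x hx
    have : ‖x‖ ≠ 0 := norm_ne_zero_iff.2 hx
    unfold gg
    fun_prop (disch := assumption)
  hom := by
    intro r hr x
    unfold gg
    rw [inner_smul_right, norm_smul, Real.norm_of_nonneg hr.le, mul_div_mul_left _ _ hr.ne']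
  odd := by
    intro x
    unfold gg
    rw [inner_neg_right, norm_neg, neg_div, mul_neg, Real.sin_neg, mul_neg]
  bd := by
    intro x
    unfold gg
    rw [abs_mul, abs_of_pos hδ]
    have := Real.abs_sin_le_one (k * (inner ℝ e x / ‖x‖))
    nlinarith
  lip := by
    intro x hx y hy
    rw [mem_sphere_zero_iff_norm] at hx hy
    rw [gg_sphere _ _ _ hx, gg_sphere _ _ _ hy, ← mul_sub, abs_mul, abs_of_pos hδ, mul_assoc]
    have h1 := sin_lip (k * inner ℝ e x) (k * inner ℝ e y)
    rw [← mul_sub, ← inner_sub_right, abs_mul, abs_of_nonneg hk] at h1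
    have h2 := abs_real_inner_le_norm e (x - y)
    rw [he, one_mul] at h2
    gcongr
    exact h1.trans (by gcongr)
  δ0 := hδ
  δ1 := hδ1
  lam0 := by positivity
  lam1 := hl

lemma cap_lower2 {n : ℕ} (hn : 2 ≤ n) : ∃ κ : ℝ, 0 < κ ∧ ∀ (θ₀ : SS n) (ε : ℝ), 0 < ε → ε ≤ 1 →
    ENNReal.ofReal (κ * ε ^ (n - 1)) ≤ sig n (ball θ₀ (2 * ε)) := by
  have hv := vol_ball_pos (0 : EE n) one_pos
  refine ⟨(volume (ball (0 : EE n) 1)).toReal / 2 ^ n, by positivity, ?_⟩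
  intro θ₀ ε h0 h1
  have h := cap_lower hn θ₀ h0 h1
  rw [← ENNReal.ofReal_toReal (measure_ball_lt_top (μ := volume) (x := (0 : EE n)) (r := 1)).ne,
    ← ENNReal.ofReal_mul hv.le, mul_comm (ENNReal.ofReal (2 ^ n))] at h
  have h2 := ENNReal.div_le_of_le_mul h
  rw [← ENNReal.ofReal_div_of_pos (by positivity)] at h2
  convert h2 using 2
  ring

lemma shift_exists (t : ℝ) : ∃ s : ℝ, 0 < s ∧ s ≤ 16 / 5 ∧
    1 / 4 ≤ |Real.sin (t + s) - Real.sin t| := by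
  have hpi := Real.pi_lt_d2
  by_cases h : 1 / 2 ≤ |Real.sin t|
  · refine ⟨Real.pi, Real.pi_pos, by linarith, ?_⟩
    rw [Real.sin_add_pi, show -Real.sin t - Real.sin t = -(2 * Real.sin t) by ring, abs_neg,
      abs_mul]
    norm_num
    linarith
  · refine ⟨Real.pi / 2, by positivity, by linarith, ?_⟩
    rw [Real.sin_add_pi_div_two]
    by_contra! h2
    have h3 := Real.sin_sq_add_cos_sq t
    have h4 := abs_lt.1 (not_le.1 h)
    have h5 := abs_lt.1 h2
    nlinarith

lemma target_exists {n : ℕ} {e : EE n} (he : ‖e‖ = 1) (θ : SS n) {h : ℝ}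
    (ht : |inner ℝ e (θ : EE n)| ≤ 1 / 2) (h0 : 0 < h) (h1 : h ≤ 2 / 5) :
    ∃ φ : SS n, inner ℝ e (φ : EE n) = inner ℝ e (θ : EE n) + h ∧ ‖(φ : EE n) - θ‖ ≤ 3 * h := by
  set t : ℝ := inner ℝ e (θ : EE n) with htd
  obtain ⟨ht1, ht2⟩ := abs_le.1 ht
  have hθ : ‖(θ : EE n)‖ = 1 := norm_eq_of_mem_sphere θ
  set w : EE n := (θ : EE n) - t • e with hw
  have hee : inner ℝ e e = (1 : ℝ) := by rw [real_inner_self_eq_norm_sq, he]; norm_num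
  have hew : inner ℝ e w = (0 : ℝ) := by
    rw [hw, inner_sub_right, inner_smul_right, hee, ← htd]; ring
  have hn2 : ∀ a b : ℝ, ‖a • e + b • w‖ ^ 2 = a ^ 2 + b ^ 2 * ‖w‖ ^ 2 := by
    intro a b
    rw [norm_add_sq_real, norm_smul, norm_smul, inner_smul_left, inner_smul_right, hew, he,
      mul_pow, mul_pow, Real.norm_eq_abs, Real.norm_eq_abs, sq_abs, sq_abs]
    simp
  have hθw : (θ : EE n) = t • e + (1 : ℝ) • w := by rw [hw, one_smul]; abel
  have hww : ‖w‖ ^ 2 = 1 - t ^ 2 := by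
    have := hn2 t 1
    rw [← hθw, hθ] at this
    linarith
  have hd : 3 / 4 ≤ 1 - t ^ 2 := by nlinarith
  have hnum : 0 ≤ 1 - (t + h) ^ 2 := by nlinarith
  set c : ℝ := Real.sqrt ((1 - (t + h) ^ 2) / (1 - t ^ 2)) with hc
  have hc0 : 0 ≤ c := Real.sqrt_nonneg _
  have hc2 : c ^ 2 * (1 - t ^ 2) = 1 - (t + h) ^ 2 := by
    rw [hc, Real.sq_sqrt (div_nonneg hnum (by linarith))]
    field_simp
  have hφ : ‖(t + h) • e + c • w‖ = 1 := by
    have := hn2 (t + h) c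
    rw [hww, hc2] at this
    have h3 : ‖(t + h) • e + c • w‖ ^ 2 = 1 := by rw [this]; ring
    exact (pow_eq_one_iff_of_nonneg (norm_nonneg _) (by norm_num)).1 h3
  refine ⟨⟨(t + h) • e + c • w, by rw [mem_sphere_zero_iff_norm]; exact hφ⟩, ?_, ?_⟩
  · simp only
    rw [inner_add_right, inner_smul_right, inner_smul_right, hee, hew]; ring
  · have e1 : ((t + h) • e + c • w) - (θ : EE n) = h • e + (c - 1) • w := by
      rw [hθw]; module
    simp only
    rw [e1, ← sq_le_sq₀ (norm_nonneg _) (by positivity), hn2, hww]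
    have hcc : |c - 1| ≤ 2 * h := by
      have h5 : |c - 1| * (c + 1) = |c ^ 2 - 1| := by
        rw [← abs_of_nonneg (by linarith : 0 ≤ c + 1), ← abs_mul]; congr 1
        ring
      have h6 : |c ^ 2 - 1| * (1 - t ^ 2) = |-(h * (2 * t + h))| := by
        rw [← abs_of_nonneg (by linarith : 0 ≤ 1 - t ^ 2), ← abs_mul]; congr 1
        rw [sub_mul, hc2]; ring
      rw [abs_neg, abs_mul, abs_of_pos h0] at h6
      have h7 : |2 * t + h| ≤ 7 / 5 := abs_le.2 ⟨by linarith, by linarith⟩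
      have h8 : |c - 1| ≤ |c ^ 2 - 1| := by
        rw [← h5]; nlinarith [abs_nonneg (c - 1)]
      nlinarith [abs_nonneg (c ^ 2 - 1)]
    have h9 : (c - 1) ^ 2 ≤ (2 * h) ^ 2 := by
      rw [← sq_abs]; exact pow_le_pow_left₀ (abs_nonneg _) hcc 2
    nlinarith [sq_nonneg t, sq_nonneg (c - 1)]


lemma inner_lower {n : ℕ} (hn : 2 ≤ n) {α : ℝ} (hα : α < n) {κ : ℝ} (hκ : 0 < κ)
    (hcap : ∀ (θ₀ : SS n) (ε : ℝ), 0 < ε → ε ≤ 1 →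
      ENNReal.ofReal (κ * ε ^ (n - 1)) ≤ sig n (ball θ₀ (2 * ε)))
    {e : EE n} (he : ‖e‖ = 1) (θ : SS n) {δ k : ℝ} (hδ : 0 < δ) (hk : 8 ≤ k)
    (ht : |inner ℝ e (θ : EE n)| ≤ 1 / 2) :
    ENNReal.ofReal (cV n α * ((δ / 8) ^ 2 * (11 / k) ^ (α - (n : ℝ))) *
      (κ * (1 / (16 * k)) ^ (n - 1))) ≤
    ∫⁻ φ : SS n, ENNReal.ofReal (cV n α * ((gg e δ k θ - gg e δ k φ) ^ 2 *
      ‖(θ : EE n) - φ‖ ^ (α - (n : ℝ)))) ∂(sig n) := by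
  have hk0 : 0 < k := by linarith
  have hcV := cV_pos hn α
  obtain ⟨s, hs0, hs1, hs2⟩ := shift_exists (k * inner ℝ e (θ : EE n))
  obtain ⟨φ₀, hφ1, hφ2⟩ := target_exists he θ (h := s / k) ht (by positivity) (by
    rw [div_le_iff₀ hk0]; linarith)
  rw [ENNReal.ofReal_mul (by positivity)]
  calc _ ≤ ENNReal.ofReal (cV n α * ((δ / 8) ^ 2 * (11 / k) ^ (α - (n : ℝ)))) *
        sig n (ball φ₀ (2 * (1 / (16 * k)))) := by
        gcongr
        exact hcap φ₀ _ (by positivity) (by rw [div_le_one (by positivity)]; linarith)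
    _ = ∫⁻ φ in ball φ₀ (2 * (1 / (16 * k))),
        ENNReal.ofReal (cV n α * ((δ / 8) ^ 2 * (11 / k) ^ (α - (n : ℝ)))) ∂(sig n) :=
        (setLIntegral_const _ _).symm
    _ ≤ ∫⁻ φ in ball φ₀ (2 * (1 / (16 * k))), ENNReal.ofReal (cV n α *
          ((gg e δ k θ - gg e δ k φ) ^ 2 * ‖(θ : EE n) - φ‖ ^ (α - (n : ℝ)))) ∂(sig n) := by
        apply setLIntegral_mono' measurableSet_ball
        intro φ hφ
        have hd : ‖(φ : EE n) - φ₀‖ < 1 / (8 * k) := by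
          have h1 : dist φ φ₀ < 2 * (1 / (16 * k)) := hφ
          rw [Subtype.dist_eq, dist_eq_norm] at h1
          calc _ < _ := h1
            _ = _ := by field_simp; norm_num
        apply ENNReal.ofReal_le_ofReal
        have hg : δ / 8 ≤ |gg e δ k θ - gg e δ k φ| := by
          rw [gg_sphere _ _ _ (norm_eq_of_mem_sphere θ), gg_sphere _ _ _ (norm_eq_of_mem_sphere φ),
            ← mul_sub, abs_mul, abs_of_pos hδ, div_eq_mul_inv]
          gcongr
          have h1 : k * inner ℝ e (φ₀ : EE n) = k * inner ℝ e (θ : EE n) + s := by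
            rw [hφ1]; field_simp
          rw [← h1] at hs2
          have h2 := sin_lip (k * inner ℝ e (φ₀ : EE n)) (k * inner ℝ e (φ : EE n))
          rw [← mul_sub, ← inner_sub_right, abs_mul, abs_of_pos hk0] at h2
          have h3 := abs_real_inner_le_norm e ((φ₀ : EE n) - φ)
          rw [he, one_mul, norm_sub_rev] at h3
          have h4 : k * |inner ℝ e ((φ₀ : EE n) - φ)| ≤ 1 / 8 := by
            calc _ ≤ k * (1 / (8 * k)) := by gcongr; exact h3.trans hd.le
              _ = 1 / 8 := by field_simp
          have h5 := abs_sub_le (Real.sin (k * inner ℝ e (φ₀ : EE n)))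
            (Real.sin (k * inner ℝ e (φ : EE n))) (Real.sin (k * inner ℝ e (θ : EE n)))
          rw [abs_sub_comm (Real.sin (k * inner ℝ e (φ : EE n)))] at h5
          norm_num
          linarith
        have hne : 0 < ‖(θ : EE n) - φ‖ := by
          rw [norm_pos_iff, sub_ne_zero]
          intro h
          rw [h, sub_self, abs_zero] at hg
          linarith
        have hle : ‖(θ : EE n) - φ‖ ≤ 11 / k := by
          have h1 : ‖(θ : EE n) - φ‖ ≤ ‖(φ : EE n) - φ₀‖ + ‖(φ₀ : EE n) - θ‖ := by
            rw [norm_sub_rev]; exact norm_sub_le_norm_sub_add_norm_sub _ _ _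
          have h2 : 3 * (s / k) ≤ (48 / 5) / k := by
            rw [mul_div_assoc', div_le_div_iff_of_pos_right hk0]; linarith
          have h3 : 1 / (8 * k) = (1 / 8) / k := by field_simp
          have h4 : (11 : ℝ) / k = (48 / 5) / k + (7 / 5) / k := by ring
          have h5 : (1 / 8 : ℝ) / k ≤ (7 / 5) / k := by rw [div_le_div_iff_of_pos_right hk0]; norm_num
          linarith
        have h6 := Real.rpow_le_rpow_of_nonpos hne hle (by linarith : α - (n : ℝ) ≤ 0)
        have h7 : (δ / 8) ^ 2 ≤ (gg e δ k θ - gg e δ k φ) ^ 2 := by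
          rw [← sq_abs (gg e δ k θ - gg e δ k φ)]
          exact pow_le_pow_left₀ (by positivity) hg 2
        gcongr
    _ ≤ _ := setLIntegral_le_lintegral _ _

lemma JJ_lower {n : ℕ} (hn : 2 ≤ n) {α : ℝ} (hα : α < n) : ∃ e : EE n, ‖e‖ = 1 ∧
    ∃ c : ℝ, 0 < c ∧ ∀ δ k : ℝ, 0 < δ → 8 ≤ k →
      ENNReal.ofReal (c * δ ^ 2 * k ^ (1 - α)) ≤ JJ α (gg e δ k) := by
  set e : EE n := EuclideanSpace.single ⟨0, by omega⟩ 1 with hedef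
  set f : EE n := EuclideanSpace.single ⟨1, by omega⟩ 1 with hfdef
  have he : ‖e‖ = 1 := by simp [hedef]
  have hf : ‖f‖ = 1 := by simp [hfdef]
  have hef : inner ℝ e f = (0 : ℝ) := by
    simp [hedef, hfdef, EuclideanSpace.inner_single_left]
  obtain ⟨κ, hκ, hcap⟩ := cap_lower2 hn
  have hcV := cV_pos hn α
  refine ⟨e, he, cV n α * ((1 / 8) ^ 2 * 11 ^ (α - (n : ℝ))) * (κ * (1 / 16) ^ (n - 1)) *
    (κ * (1 / 4) ^ (n - 1)), by positivity, ?_⟩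
  intro δ k hδ hk
  have hk0 : 0 < k := by linarith
  set f' : SS n := ⟨f, by rw [mem_sphere_zero_iff_norm]; exact hf⟩ with hf'
  set I := cV n α * ((δ / 8) ^ 2 * (11 / k) ^ (α - (n : ℝ))) * (κ * (1 / (16 * k)) ^ (n - 1))
    with hI
  have hI0 : 0 ≤ I := by positivity
  have heq : cV n α * ((1 / 8) ^ 2 * 11 ^ (α - (n : ℝ))) * (κ * (1 / 16) ^ (n - 1)) *
    (κ * (1 / 4) ^ (n - 1)) * δ ^ 2 * k ^ (1 - α) = I * (κ * (1 / 4) ^ (n - 1)) := by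
    rw [hI, Real.div_rpow (by norm_num) hk0.le]
    have h1 : k ^ (1 - α) = (k ^ (α - (n : ℝ)))⁻¹ * (k ^ (n - 1))⁻¹ := by
      rw [← Real.rpow_neg hk0.le, ← Real.rpow_natCast, ← Real.rpow_neg hk0.le, ← Real.rpow_add hk0,
        Nat.cast_sub (by omega)]
      congr 1; push_cast; ring
    have h2 : (1 / (16 * k)) ^ (n - 1) = (1 / 16) ^ (n - 1) * (k ^ (n - 1))⁻¹ := by
      rw [← inv_pow, ← mul_pow]; congr 1; field_simp
    rw [h1, h2]
    ring
  rw [heq, ENNReal.ofReal_mul hI0, JJ]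
  calc _ ≤ ENNReal.ofReal I * sig n (ball f' (2 * (1 / 4))) := by
        gcongr; exact hcap f' _ (by norm_num) (by norm_num)
    _ = ∫⁻ θ in ball f' (2 * (1 / 4)), ENNReal.ofReal I ∂(sig n) := (setLIntegral_const _ _).symm
    _ ≤ ∫⁻ θ in ball f' (2 * (1 / 4)), (∫⁻ φ : SS n, ENNReal.ofReal (cV n α *
        ((gg e δ k θ - gg e δ k φ) ^ 2 * ‖(θ : EE n) - φ‖ ^ (α - (n : ℝ)))) ∂(sig n)) ∂(sig n) := by
        apply setLIntegral_mono' measurableSet_ball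
        intro θ hθ
        apply inner_lower hn hα hκ hcap he θ hδ hk
        have h1 : dist θ f' < 2 * (1 / 4) := hθ
        rw [Subtype.dist_eq, dist_eq_norm] at h1
        have h2 := abs_real_inner_le_norm e ((θ : EE n) - f)
        rw [he, one_mul, inner_sub_right, hef, sub_zero] at h2
        have h3 : ‖(θ : EE n) - f‖ < 2 * (1 / 4) := h1
        linarith
    _ ≤ _ := setLIntegral_le_lintegral _ _


lemma choose_params {α β D V U c : ℝ} (hα0 : 0 < α) (hα1 : α < 1) (hβ1 : β < 1)
    (hc : 0 < c) : ∃ l : ℝ, 0 < l ∧ ∃ R₀ : ℝ, 1 ≤ R₀ ∧ ∀ R, R₀ ≤ R → 8 * l ≤ R ∧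
      D * (R ^ (-2 : ℝ) + l ^ (-2 : ℝ)) + V * R ^ (α - 1) + U * R ^ (β - 1)
        < c / 2 * l ^ (α - 1) := by
  have h1 : Tendsto (fun l : ℝ => D * l ^ (-(1 + α))) atTop (𝓝 (D * 0)) :=
    (tendsto_rpow_neg_atTop (by linarith)).const_mul D
  rw [mul_zero] at h1
  obtain ⟨l, hl, hl0⟩ := ((h1.eventually_lt_const (half_pos hc)).and (eventually_gt_atTop 0)).exists
  have hl2 : D * l ^ (-2 : ℝ) < c / 2 * l ^ (α - 1) := by
    have : l ^ (-2 : ℝ) = l ^ (-(1 + α)) * l ^ (α - 1) := by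
      rw [← Real.rpow_add hl0]; congr 1; ring
    rw [this, ← mul_assoc]
    exact mul_lt_mul_of_pos_right hl (Real.rpow_pos_of_pos hl0 _)
  refine ⟨l, hl0, ?_⟩
  have t1 : Tendsto (fun R : ℝ => R ^ (-2 : ℝ)) atTop (𝓝 0) := tendsto_rpow_neg_atTop (by norm_num)
  have t2 : Tendsto (fun R : ℝ => R ^ (α - 1)) atTop (𝓝 0) := by
    have := tendsto_rpow_neg_atTop (y := 1 - α) (by linarith)
    simpa using this
  have t3 : Tendsto (fun R : ℝ => R ^ (β - 1)) atTop (𝓝 0) := by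
    have := tendsto_rpow_neg_atTop (y := 1 - β) (by linarith)
    simpa using this
  have t4 := (((t1.add_const (l ^ (-2 : ℝ))).const_mul D).add (t2.const_mul V)).add (t3.const_mul U)
  have t5 := t4.eventually_lt_const (u := c / 2 * l ^ (α - 1)) (by simpa using hl2)
  obtain ⟨R₀, h⟩ := eventually_atTop.1 (t5.and (eventually_ge_atTop (8 * l)))
  exact ⟨max R₀ 1, le_max_right _ _, fun R hR => ⟨(h R ((le_max_left _ _).trans hR)).2,
    (h R ((le_max_left _ _).trans hR)).1⟩⟩

lemma real_contra {N α β D S V U c l R δ w : ℝ} (hl : 0 < l) (hR : 0 < R) (hδ : 0 < δ)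
    (hw : 2 * w + c * δ ^ 2 * (R / l) ^ (1 - α) ≤ 2 * ((1 + δ ^ 2) * V))
    (hp : (D * S) * (R ^ (-2 : ℝ) + l ^ (-2 : ℝ)) + V * R ^ (α - 1) + U * R ^ (β - 1)
        < c / 2 * l ^ (α - 1)) :
    R ^ (N - 1) * ((1 + D * (δ ^ 2 + (δ * (R / l)) ^ 2)) * S) + R ^ (N + α) * w
      + R ^ (N + β) * ((1 + δ ^ 2) * U) <
    R ^ (N - 1) * S + R ^ (N + α) * V + R ^ (N + β) * U := by
  have e1 : R ^ (N - 1) = R ^ (N + 1) * R ^ (-2 : ℝ) := by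
    rw [← Real.rpow_add hR]; congr 1; ring
  have e2 : R ^ (N + α) = R ^ (N + 1) * R ^ (α - 1) := by
    rw [← Real.rpow_add hR]; congr 1; ring
  have e3 : R ^ (N + β) = R ^ (N + 1) * R ^ (β - 1) := by
    rw [← Real.rpow_add hR]; congr 1; ring
  have e4 : R ^ (α - 1) * (R / l) ^ (1 - α) = l ^ (α - 1) := by
    rw [Real.div_rpow hR.le hl.le, show (1 - α) = -(α - 1) by ring, Real.rpow_neg hR.le,
      Real.rpow_neg hl.le]
    have := (Real.rpow_pos_of_pos hR (α - 1)).ne'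
    field_simp
  have e5 : R ^ (-2 : ℝ) * (R / l) ^ 2 = l ^ (-2 : ℝ) := by
    rw [Real.rpow_neg hR.le, Real.rpow_neg hl.le, Real.rpow_two, Real.rpow_two]
    field_simp
  have hq : 0 < R ^ (N + 1) := Real.rpow_pos_of_pos hR _
  have ha : 0 < R ^ (α - 1) := Real.rpow_pos_of_pos hR _
  rw [e1, e2, e3]
  have hw2 : R ^ (α - 1) * w ≤ R ^ (α - 1) * ((1 + δ ^ 2) * V) - c / 2 * δ ^ 2 * l ^ (α - 1) := by
    rw [← e4]
    have := mul_le_mul_of_nonneg_left hw ha.le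
    linarith
  have hp2 := mul_lt_mul_of_pos_left hp (pow_pos hδ 2)
  rw [← e5] at hp2
  have : R ^ (-2 : ℝ) * ((1 + D * (δ ^ 2 + (δ * (R / l)) ^ 2)) * S) + R ^ (α - 1) * w
      + R ^ (β - 1) * ((1 + δ ^ 2) * U) <
    R ^ (-2 : ℝ) * S + R ^ (α - 1) * V + R ^ (β - 1) * U := by
    linarith
  have := mul_lt_mul_of_pos_left this hq
  linarith

lemma main_result (n : ℕ) (hn : 2 ≤ n) (α β A : ℝ)
    (hα0 : 0 < α) (hαn : α < n) (hβ : 0 < β) (hA : 0 < A) (hαβ : α < β) (hβ1 : β < 1) :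
    ∃ mstar : ℝ, 0 < mstar ∧
      ∀ m, mstar < m → ¬ IsL1LocalMin α β A m (ballOfVolume n m) := by
  obtain ⟨e, he, c, hc, hJ⟩ := JJ_lower hn hαn
  have hn2 : (2 : ℝ) ≤ n := by exact_mod_cast hn
  obtain ⟨S, hS0, hS⟩ : ∃ S : ℝ, 0 ≤ S ∧ μH[(n : ℝ) - 1] (sphere (0 : EE n) 1) = ENNReal.ofReal S :=
    ⟨_, ENNReal.toReal_nonneg, (ENNReal.ofReal_toReal (sphere_fin hn).ne).symm⟩
  obtain ⟨V, hV0, hV⟩ : ∃ S : ℝ, 0 ≤ S ∧ rieszEnergy α (ball (0 : EE n) 1) = ENNReal.ofReal S :=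
    ⟨_, ENNReal.toReal_nonneg, (ENNReal.ofReal_toReal (riesz_fin hn hα0).ne).symm⟩
  obtain ⟨U, hU0, hU⟩ : ∃ S : ℝ, 0 ≤ S ∧ potEnergy β A (ball (0 : EE n) 1) = ENNReal.ofReal S :=
    ⟨_, ENNReal.toReal_nonneg, (ENNReal.ofReal_toReal (pot_fin hβ hA).ne).symm⟩
  set D : ℝ := n * 3 ^ n with hD
  have hD0 : 0 ≤ D := by positivity
  obtain ⟨l, hl, R₀, hR₀, hpar⟩ := choose_params (D := D * S) (V := V) (U := U) hα0
    (hαβ.trans hβ1) hβ1 hc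
  set b := (volume (ball (0 : EE n) 1)).toReal with hb
  have hb0 : 0 < b := vol_ball_pos 0 one_pos
  have hbe : volume (ball (0 : EE n) 1) = ENNReal.ofReal b :=
    (ENNReal.ofReal_toReal measure_ball_lt_top.ne).symm
  refine ⟨b * R₀ ^ n, by positivity, fun m hm => ?_⟩
  rintro ⟨-, hvol, ε, hε, hmin⟩
  have hm0 : 0 < m := lt_of_le_of_lt (by positivity) hm
  unfold ballOfVolume at hvol hmin
  change volume (ball (0 : EE n) ((m / b) ^ (1 / (n : ℝ)))) = _ at hvol
  change ∀ F : Set (EE n), MeasurableSet F → _ → volume (symmDiff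
    (ball (0 : EE n) ((m / b) ^ (1 / (n : ℝ)))) F) < _ →
      totalEnergy α β A (ball (0 : EE n) ((m / b) ^ (1 / (n : ℝ)))) ≤ _ at hmin
  set R := (m / b) ^ (1 / (n : ℝ)) with hRdef
  have hRR : R₀ ≤ R := by
    rw [hRdef, one_div]
    rw [Real.le_rpow_inv_iff_of_pos (by linarith) (by positivity) (by linarith), Real.rpow_natCast,
      le_div_iff₀ hb0]
    linarith
  have hR : 0 < R := by linarith
  obtain ⟨h8, hp⟩ := hpar R hRR
  set k := R / l with hk
  have hk8 : 8 ≤ k := by rw [hk, le_div_iff₀ hl]; exact h8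
  have hk0 : 0 < k := by linarith
  obtain ⟨δ, hδ0, hδ1, hδ2, hδ3⟩ : ∃ δ : ℝ, 0 < δ ∧ δ ≤ 1 / 2 ∧ δ * k ≤ 1 ∧
      R ^ n * (2 * δ * b) < ε := by
    have hX : 0 < R ^ n * (2 * b) := by positivity
    refine ⟨min (1 / 2) (min (1 / k) (ε / (2 * (R ^ n * (2 * b))))), by positivity,
      min_le_left _ _, ?_, ?_⟩
    · rw [← le_div_iff₀ hk0]; exact (min_le_right _ _).trans (min_le_left _ _)
    · have : min (1 / 2) (min (1 / k) (ε / (2 * (R ^ n * (2 * b))))) ≤ ε / (2 * (R ^ n * (2 * b))) :=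
        (min_le_right _ _).trans (min_le_right _ _)
      rw [le_div_iff₀ (by positivity)] at this
      nlinarith
  have H := gg_shape hn he hδ0 hδ1 hk0.le hδ2
  have hle := hmin (R • shp (gg e δ k)) (H.meas_shp.const_smul₀ R)
    (by rw [vol_smul hR, vol_eq H, ← vol_smul hR, smul_unitBall_of_pos hR, hvol])
    (by
      refine (symm_small_R H hR).trans_lt ?_
      rw [hbe, ← ENNReal.ofReal_mul (by positivity), ← ENNReal.ofReal_mul (by positivity)]
      exact (ENNReal.ofReal_lt_ofReal_iff hε).2 hδ3)
  -- energies
  have hrz := riesz_le H hα0 hαn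
  have hfin : rieszEnergy α (shp (gg e δ k)) ≠ ⊤ := by
    intro h
    rw [h, hV, ← ENNReal.ofReal_mul (by positivity)] at hrz
    rw [ENNReal.mul_top (by norm_num), top_add, top_le_iff] at hrz
    exact ENNReal.mul_ne_top (by norm_num) ENNReal.ofReal_ne_top hrz
  obtain ⟨w, hw0, hw⟩ : ∃ S : ℝ, 0 ≤ S ∧ rieszEnergy α (shp (gg e δ k)) = ENNReal.ofReal S :=
    ⟨_, ENNReal.toReal_nonneg, (ENNReal.ofReal_toReal hfin).symm⟩
  have hrz2 : 2 * w + c * δ ^ 2 * (R / l) ^ (1 - α) ≤ 2 * ((1 + δ ^ 2) * V) := by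
    have := (add_le_add_right (hJ δ k hδ0 hk8) (2 * rieszEnergy α (shp (gg e δ k)))).trans hrz
    rw [hw, hV, ← ENNReal.ofReal_mul (by positivity), two_ofReal, two_ofReal,
      ← ENNReal.ofReal_add (by positivity) (by positivity),
      ENNReal.ofReal_le_ofReal_iff (by positivity)] at this
    exact this
  have hc := real_contra (N := n) (D := D) hl hR hδ0 hrz2 hp
  have hup : totalEnergy α β A (R • shp (gg e δ k)) ≤ ENNReal.ofReal
      (R ^ ((n : ℝ) - 1) * ((1 + D * (δ ^ 2 + (δ * (R / l)) ^ 2)) * S) + R ^ ((n : ℝ) + α) * w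
      + R ^ ((n : ℝ) + β) * ((1 + δ ^ 2) * U)) := by
    rw [ENNReal.ofReal_add (by positivity) (by positivity),
      ENNReal.ofReal_add (by positivity) (by positivity)]
    unfold totalEnergy
    refine add_le_add (add_le_add ?_ ?_) ?_
    · refine (per_shp H hR).trans (le_of_eq ?_)
      rw [hS, ← ENNReal.ofReal_mul (by positivity), ← ENNReal.ofReal_mul (by positivity)]
    · rw [riesz_smul hR, hw, ← ENNReal.ofReal_mul (by positivity)]
    · rw [pot_smul hR, ENNReal.ofReal_mul (by positivity)]
      gcongr
      refine (pot_le H A hβ.le (by linarith)).trans (le_of_eq ?_)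
      rw [hU, ← ENNReal.ofReal_mul (by positivity)]
  have hlo : ENNReal.ofReal (R ^ ((n : ℝ) - 1) * S + R ^ ((n : ℝ) + α) * V + R ^ ((n : ℝ) + β) * U)
      ≤ totalEnergy α β A (ball (0 : EE n) R) := by
    rw [ENNReal.ofReal_add (by positivity) (by positivity),
      ENNReal.ofReal_add (by positivity) (by positivity)]
    unfold totalEnergy
    refine add_le_add (add_le_add ?_ ?_) ?_
    · refine le_trans (le_of_eq ?_) (per_ball hn hR)
      rw [hS, ← ENNReal.ofReal_mul (by positivity)]
    · rw [← smul_unitBall_of_pos hR, riesz_smul hR, hV, ← ENNReal.ofReal_mul (by positivity)]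
    · rw [← smul_unitBall_of_pos hR, pot_smul hR, hU, ← ENNReal.ofReal_mul (by positivity)]
  have hfinal := (hlo.trans hle).trans hup
  rw [ENNReal.ofReal_le_ofReal_iff (by positivity)] at hfinal
  exact absurd hc (not_lt.2 hfinal)

end Helpers

/-- If `α < β` and `β < 1`, then for all sufficiently large masses the ball is not an
`L¹`-local minimizer. -/
theorem statement7 (n : ℕ) (hn : 2 ≤ n) (α β A : ℝ)
    (hα0 : 0 < α) (hαn : α < n) (hβ : 0 < β) (hA : 0 < A) (hαβ : α < β) (hβ1 : β < 1) :
    ∃ mstar : ℝ, 0 < mstar ∧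
      ∀ m, mstar < m → ¬ IsL1LocalMin α β A m (ballOfVolume n m) := by
  exact main_result n hn α β A hα0 hαn hβ hA hαβ hβ1
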